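/- Let b ∈ ℝ, c < 0, m1 > 0 real, and q > 0 real be fixed, and consider the operator with potential v(x) = b·q^{m1}·cos 2x + c·q^{2m1}·cos 4x. Set B_m := (q^{m1·(2m−1)}·|c|^{m−1}·√(−2c) / (2^{3m−5}·((2m−3)!!)²·π))·|sin(bπ/(4√(−2c)))|. Then there exist constants C > 0 and a positive integer M such that for all integers m ≥ M, |γ_{2m−1} − B_m| ≤ C·B_m·(log m)/m. -/

import Mathlib

open Real

noncomputable section

/-- `f` is a (possibly zero) solution of `-f'' + v f = λ f` that is `π`-periodic. -/
def IsPerEF (v : ℝ → ℝ) (lam : ℝ) (f : ℝ → ℝ) : Prop :=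
  ContDiff ℝ 2 f ∧ (∀ x, -(deriv (deriv f) x) + v x * f x = lam * f x) ∧
    ∀ x, f (x + Real.pi) = f x

/-- `f` is a (possibly zero) solution of `-f'' + v f = λ f` with `f(x+π) = -f(x)`. -/
def IsSemiEF (v : ℝ → ℝ) (lam : ℝ) (f : ℝ → ℝ) : Prop :=
  ContDiff ℝ 2 f ∧ (∀ x, -(deriv (deriv f) x) + v x * f x = lam * f x) ∧
    ∀ x, f (x + Real.pi) = -f x

/-- Multiplicity of `λ` as a periodic eigenvalue: the dimension of the space of
π-periodic solutions. -/
def perMult (v : ℝ → ℝ) (lam : ℝ) : ℕ :=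
  Module.finrank ℝ (Submodule.span ℝ {f : ℝ → ℝ | IsPerEF v lam f})

/-- Multiplicity of `λ` as a semi-periodic eigenvalue. -/
def semiMult (v : ℝ → ℝ) (lam : ℝ) : ℕ :=
  Module.finrank ℝ (Submodule.span ℝ {f : ℝ → ℝ | IsSemiEF v lam f})

/-- `lamP` enumerates the periodic eigenvalues of `-D² + v` in nondecreasing order
with multiplicity (indices `0, 1, 2, …`). -/
def EnumPer (v : ℝ → ℝ) (lamP : ℕ → ℝ) : Prop :=
  Monotone lamP ∧ (∀ n, ∃ f, f ≠ 0 ∧ IsPerEF v (lamP n) f) ∧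
    ∀ lam : ℝ, Nat.card {n : ℕ // lamP n = lam} = perMult v lam

/-- `lamM` enumerates the semi-periodic eigenvalues of `-D² + v` in nondecreasing order
with multiplicity (indices `1, 2, 3, …`). -/
def EnumSemi (v : ℝ → ℝ) (lamM : ℕ → ℝ) : Prop :=
  MonotoneOn lamM {n : ℕ | 1 ≤ n} ∧ (∀ n, 1 ≤ n → ∃ f, f ≠ 0 ∧ IsSemiEF v (lamM n) f) ∧
    ∀ lam : ℝ, Nat.card {n : ℕ // 1 ≤ n ∧ lamM n = lam} = semiMult v lam

/-- The length of the `n`-th instability interval: `λ_{n+1}^- - λ_n^-` for odd `n`,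
`λ_n^+ - λ_{n-1}^+` for even `n`. -/
def gapLen (lamP lamM : ℕ → ℝ) (n : ℕ) : ℝ :=
  if Odd n then lamM (n + 1) - lamM n else lamP n - lamP (n - 1)

namespace WH

theorem ode_global (F : ℝ → ℝ → ℝ) (x0 : ℝ) (K L : NNReal)
    (hlip : ∀ t, LipschitzWith K (F t)) (hcont : ∀ x, Continuous (fun t => F t x))
    (hb : ∀ t x, |F t x| ≤ L) :
    ∃ θ : ℝ → ℝ, θ 0 = x0 ∧ ∀ t, HasDerivAt θ (F t (θ t)) t := by
  have hloc : ∀ n : ℕ, ∃ θ : ℝ → ℝ, θ 0 = x0 ∧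
      ∀ t ∈ Set.Ioo (-((n:ℝ)+1)) ((n:ℝ)+1), HasDerivAt θ (F t (θ t)) t := by
    intro n
    have h0 : (0:ℝ) ∈ Set.Icc (-((n:ℝ)+1)) ((n:ℝ)+1) := by
      constructor <;> [linarith [n.cast_nonneg (α := ℝ)]; positivity]
    have hPL : IsPicardLindelof F (⟨0, h0⟩ : Set.Icc (-((n:ℝ)+1)) ((n:ℝ)+1)) x0
        (L * ((n : NNReal)+1)) 0 L K := by
      refine ⟨fun t _ => (hlip t).lipschitzOnWith, fun x _ => (hcont x).continuousOn,
        fun t _ x _ => by simpa using hb t x, ?_⟩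
      simp
    obtain ⟨θ, h1, h2⟩ := hPL.exists_eq_forall_mem_Icc_hasDerivWithinAt₀
    refine ⟨θ, h1, fun t ht => ?_⟩
    exact (h2 t (Set.Ioo_subset_Icc_self ht)).hasDerivAt (Icc_mem_nhds ht.1 ht.2)
  choose θ h0 h1 using hloc
  have hagree : ∀ (n m : ℕ) (s : ℝ), |s| < n + 1 → |s| < m + 1 → θ n s = θ m s := by
    intro n m s hn hm
    have hc : ∀ k : ℕ, (min (n:ℝ) m) + 1 ≤ k + 1 → ∀ t ∈ Set.Ioo (-((min (n:ℝ) m)+1)) ((min (n:ℝ) m)+1),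
        HasDerivAt (θ k) (F t (θ k t)) t ∧ θ k t ∈ Set.univ := by
      intro k hk t ht
      exact ⟨h1 k t ⟨by linarith [ht.1], by linarith [ht.2]⟩, trivial⟩
    have hpos : 0 ≤ min (n:ℝ) m := by positivity
    refine ODE_solution_unique_of_mem_Ioo (v := F) (s := fun _ => Set.univ) (K := K) (t₀ := 0)
      (a := -((min (n:ℝ) m)+1)) (b := (min (n:ℝ) m)+1)
      (fun t _ => (hlip t).lipschitzOnWith) ⟨by linarith, by linarith⟩
      (hc n (by simp)) (hc m (by simp)) (by rw [h0, h0]) ?_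
    have : |s| < min (n:ℝ) m + 1 := by
      rcases min_choice (n:ℝ) m with h | h <;> rw [h] <;> assumption
    exact ⟨(abs_lt.mp this).1, (abs_lt.mp this).2⟩
  refine ⟨fun t => θ ⌈|t|⌉₊ t, h0 _, fun t => ?_⟩
  have ht : |t| < ⌈|t|⌉₊ + 1 := by linarith [Nat.le_ceil |t|]
  have hd := h1 ⌈|t|⌉₊ t ⟨(abs_lt.mp ht).1, (abs_lt.mp ht).2⟩
  refine hd.congr_of_eventuallyEq ?_
  filter_upwards [Ioo_mem_nhds (abs_lt.mp ht).1 (abs_lt.mp ht).2] with s hs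
  exact hagree _ _ s (by linarith [Nat.le_ceil |s|]) (abs_lt.mpr hs)

/-- Strict comparison. -/
theorem ode_compare (a b a' b' : ℝ → ℝ) (T : ℝ) (ha : ∀ x, HasDerivAt a (a' x) x)
    (hb : ∀ x, HasDerivAt b (b' x) x) (h0 : a 0 ≤ b 0)
    (h : ∀ x, a x = b x → a' x < b' x) (hT : 0 < T) : a T < b T := by
  have hle : ∀ ⦃x⦄, x ∈ Set.Icc 0 T → a x ≤ b x :=
    image_le_of_deriv_right_lt_deriv_boundary
      (fun x _ => (ha x).continuousAt.continuousWithinAt)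
      (fun x _ => (ha x).hasDerivWithinAt) h0 hb (fun x _ => h x)
  have hT' := hle (Set.right_mem_Icc.mpr hT.le)
  rcases hT'.lt_or_eq with h1 | h1
  · exact h1
  exfalso
  have h2 := h T h1
  have hd : HasDerivAt (fun x => b x - a x) (b' T - a' T) T := (hb T).sub (ha T)
  have ht := (hasDerivWithinAt_iff_tendsto_slope' (s := Set.Iio T) (by simp)).mp
    (hd.hasDerivWithinAt (s := Set.Iio T))
  have hle0 : b' T - a' T ≤ 0 := by
    refine le_of_tendsto ht ?_
    filter_upwards [Ioo_mem_nhdsLT hT] with x hx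
    have h3 := hle ⟨hx.1.le, hx.2.le⟩
    rw [slope_def_field]
    apply div_nonpos_of_nonneg_of_nonpos
    · linarith
    · linarith [hx.2]
  linarith

theorem lin_unique (Q : ℝ → ℝ) (B : ℝ) (hB : ∀ x, |Q x| ≤ B) (z z1 : ℝ → ℝ)
    (h1 : ∀ x, HasDerivAt z (z1 x) x) (h2 : ∀ x, HasDerivAt z1 (Q x * z x) x)
    (x0 : ℝ) (hz : z x0 = 0) (hz1 : z1 x0 = 0) : ∀ x, z x = 0 ∧ z1 x = 0 := by
  have hB0 : 0 ≤ B := (abs_nonneg _).trans (hB 0)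
  have key : (fun x => (z x, z1 x)) = (fun _ => ((0:ℝ), (0:ℝ))) := by
    refine ODE_solution_unique_univ (v := fun x (p : ℝ × ℝ) => (p.2, Q x * p.1))
      (s := fun _ => Set.univ) (K := ⟨max 1 B, by positivity⟩) (t₀ := x0) ?_ ?_ ?_ ?_
    · intro t
      apply LipschitzWith.lipschitzOnWith
      apply LipschitzWith.of_dist_le_mul
      intro p q
      simp only [Prod.dist_eq, Real.dist_eq]
      have e1 : |Q t * p.1 - Q t * q.1| = |Q t| * |p.1 - q.1| := by rw [← mul_sub, abs_mul]
      rw [e1]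
      apply max_le
      · calc |p.2 - q.2| ≤ max |p.1 - q.1| |p.2 - q.2| := le_max_right _ _
          _ ≤ max 1 B * max |p.1 - q.1| |p.2 - q.2| :=
            le_mul_of_one_le_left (by positivity) (le_max_left _ _)
      · exact mul_le_mul ((hB t).trans (le_max_right _ _)) (le_max_left _ _) (abs_nonneg _)
          (le_trans zero_le_one (le_max_left _ _))
    · intro t
      exact ⟨(h1 t).prodMk (h2 t), trivial⟩
    · intro t
      refine ⟨?_, trivial⟩
      have := hasDerivAt_const t ((0:ℝ),(0:ℝ))
      convert this using 1
      ext <;> simp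
    · simp [hz, hz1]
  intro x
  have := congrFun key x
  simpa using this

theorem prufer_lip (w : ℝ → ℝ) (M : ℝ) (hM : 0 ≤ M) (hw1 : ∀ x, 1 ≤ w x)
    (hw2 : ∀ x, w x ≤ M) (ω : ℝ) (hω : 0 < ω) (t : ℝ) :
    LipschitzWith (⟨2 * M / ω, by positivity⟩ : NNReal) (fun θ => ω - w t * sin θ ^ 2 / ω) := by
  apply LipschitzWith.of_dist_le_mul
  intro p q
  simp only [Real.dist_eq]
  have hs : |sin p - sin q| ≤ |p - q| := Real.abs_sin_sub_sin_le p q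
  have e : ω - w t * sin p ^ 2 / ω - (ω - w t * sin q ^ 2 / ω) =
      (w t / ω) * ((sin q - sin p) * (sin q + sin p)) := by ring
  rw [e, abs_mul, abs_mul, abs_sub_comm (sin q)]
  have h1 : |w t / ω| ≤ M / ω := by
    rw [abs_of_nonneg (div_nonneg (by linarith [hw1 t]) hω.le)]
    gcongr; exact hw2 t
  have h2 : |sin q + sin p| ≤ 2 := by
    rw [abs_le]; constructor <;> linarith [neg_one_le_sin p, neg_one_le_sin q, sin_le_one p, sin_le_one q]
  calc |w t / ω| * (|sin p - sin q| * |sin q + sin p|) ≤ (M / ω) * (|p - q| * 2) := by gcongr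
    _ = 2 * M / ω * |p - q| := by ring

theorem prufer_exists (w : ℝ → ℝ) (M : ℝ) (hw : Continuous w) (hw1 : ∀ x, 1 ≤ w x)
    (hw2 : ∀ x, w x ≤ M) (ω : ℝ) (hω : 0 < ω) :
    ∃ θ : ℝ → ℝ, θ 0 = π / 2 ∧
      ∀ x, HasDerivAt θ (ω - w x * sin (θ x) ^ 2 / ω) x := by
  have hM : 0 ≤ M := by linarith [hw1 0, hw2 0]
  refine ode_global (fun x θ => ω - w x * sin θ ^ 2 / ω) (π/2) ⟨2 * M / ω, by positivity⟩
    ⟨ω + M / ω, by positivity⟩ ?_ ?_ ?_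
  · intro t
    exact prufer_lip w M hM hw1 hw2 ω hω t
  · intro x
    fun_prop
  · intro t x
    change |ω - w t * sin x ^ 2 / ω| ≤ ω + M / ω
    have h1 : 0 ≤ w t * sin x ^ 2 / ω := by
      have := hw1 t
      positivity
    have h2 : w t * sin x ^ 2 / ω ≤ M / ω := by
      gcongr
      have := hw2 t
      have := hw1 t
      nlinarith [sin_sq_le_one x, sq_nonneg (sin x)]
    have h3 : 0 ≤ M / ω := by positivity
    rw [abs_le]; constructor <;> linarith

theorem prufer_sol (w : ℝ → ℝ) (hw : Continuous w) (ω : ℝ) (hω : 0 < ω) (θ : ℝ → ℝ)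
    (h0 : θ 0 = π / 2) (hθ : ∀ x, HasDerivAt θ (ω - w x * sin (θ x) ^ 2 / ω) x) :
    ∃ r : ℝ → ℝ, (∀ x, r x = exp (∫ s in (0:ℝ)..x, w s / ω * sin (θ s) * cos (θ s))) ∧
      (∀ x, HasDerivAt (fun x => r x * sin (θ x)) (ω * (r x * cos (θ x))) x) ∧
      (∀ x, HasDerivAt (fun x => ω * (r x * cos (θ x))) ((w x - ω ^ 2) * (r x * sin (θ x))) x) ∧
      r 0 * sin (θ 0) = 1 ∧ ω * (r 0 * cos (θ 0)) = 0 := by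
  have hcθ : Continuous θ := continuous_iff_continuousAt.mpr fun x => (hθ x).continuousAt
  have hcont : Continuous (fun s => w s / ω * sin (θ s) * cos (θ s)) := by fun_prop
  have hr : ∀ x, HasDerivAt (fun x => exp (∫ s in (0:ℝ)..x, w s / ω * sin (θ s) * cos (θ s)))
      (exp (∫ s in (0:ℝ)..x, w s / ω * sin (θ s) * cos (θ s)) *
        (w x / ω * sin (θ x) * cos (θ x))) x := fun x =>
    (hcont.integral_hasStrictDerivAt 0 x).hasDerivAt.exp
  refine ⟨fun x => exp (∫ s in (0:ℝ)..x, w s / ω * sin (θ s) * cos (θ s)), fun x => rfl, fun x => ?_, fun x => ?_, ?_, ?_⟩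
  · refine ((hr x).mul (hθ x).sin).congr_deriv ?_
    beta_reduce
    field_simp
    ring
  · refine (((hr x).mul (hθ x).cos).const_mul ω).congr_deriv ?_
    beta_reduce
    have := sin_sq_add_cos_sq (θ x)
    have hc : cos (θ x) ^ 2 = 1 - sin (θ x) ^ 2 := by linarith
    field_simp
    ring_nf
    rw [hc]
    ring
  · simp [h0]
  · simp [h0]

end WH

namespace WH

theorem prufer_bounds (w : ℝ → ℝ) (M : ℝ) (hw1 : ∀ x, 1 ≤ w x)
    (hw2 : ∀ x, w x ≤ M) (ω : ℝ) (hω : 0 < ω) (θ : ℝ → ℝ) (h0 : θ 0 = π / 2)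
    (hθ : ∀ x, HasDerivAt θ (ω - w x * sin (θ x) ^ 2 / ω) x) (x : ℝ) (hx : 0 ≤ x) :
    θ x ≤ π / 2 + ω * x ∧ π / 2 + (ω - M / ω) * x ≤ θ x := by
  have hterm : ∀ x, 0 ≤ w x * sin (θ x) ^ 2 / ω ∧ w x * sin (θ x) ^ 2 / ω ≤ M / ω := by
    intro x
    have h1 := hw1 x
    have h2 := hw2 x
    refine ⟨by positivity, ?_⟩
    gcongr
    nlinarith [sin_sq_le_one (θ x), sq_nonneg (sin (θ x))]
  have hl : ∀ c x : ℝ, HasDerivAt (fun x => θ x - c * x) (ω - w x * sin (θ x) ^ 2 / ω - c) x := by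
    intro c x
    exact ((hθ x).sub ((hasDerivAt_id x).const_mul c)).congr_deriv (by simp)
  constructor
  · have := antitone_of_hasDerivAt_nonpos (hl ω) (fun x => by
      simp only [Pi.zero_apply]; linarith [(hterm x).1]) hx
    simp [h0] at this
    linarith
  · have := monotone_of_hasDerivAt_nonneg (hl (ω - M / ω)) (fun x => by
      simp only [Pi.zero_apply]; linarith [(hterm x).2]) hx
    simp [h0] at this
    linarith

theorem prufer_pos (w : ℝ → ℝ) (ω : ℝ) (hω : 0 < ω) (θ : ℝ → ℝ) (h0 : θ 0 = π / 2)
    (hθ : ∀ x, HasDerivAt θ (ω - w x * sin (θ x) ^ 2 / ω) x) (x : ℝ) (hx : 0 < x) :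
    0 < θ x := by
  refine ode_compare (fun _ => 0) θ (fun _ => 0) _ x (fun x => hasDerivAt_const x 0) hθ
    (by rw [h0]; positivity) ?_ hx
  intro y hy
  simp [← hy, hω]

theorem prufer_mono (w : ℝ → ℝ) (hw1 : ∀ x, 1 ≤ w x) (ω ω' : ℝ) (hω : 0 < ω) (hlt : ω < ω')
    (θ θ' : ℝ → ℝ) (h0 : θ 0 = π / 2) (h0' : θ' 0 = π / 2)
    (hθ : ∀ x, HasDerivAt θ (ω - w x * sin (θ x) ^ 2 / ω) x)
    (hθ' : ∀ x, HasDerivAt θ' (ω' - w x * sin (θ' x) ^ 2 / ω') x) (x : ℝ) (hx : 0 < x) :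
    θ x < θ' x := by
  refine ode_compare θ θ' _ _ x hθ hθ' (by rw [h0, h0']) ?_ hx
  intro y hy
  rw [hy]
  have h1 := hw1 y
  have : w y * sin (θ' y) ^ 2 / ω' ≤ w y * sin (θ' y) ^ 2 / ω := by gcongr
  linarith

theorem prufer_cont (w : ℝ → ℝ) (M : ℝ) (hw1 : ∀ x, 1 ≤ w x)
    (hw2 : ∀ x, w x ≤ M) (Θ : ℝ → ℝ → ℝ) (h0 : ∀ ω, 0 < ω → Θ ω 0 = π / 2)
    (hθ : ∀ ω, 0 < ω → ∀ x, HasDerivAt (Θ ω) (ω - w x * sin (Θ ω x) ^ 2 / ω) x) :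
    ContinuousOn (fun ω => Θ ω (π / 2)) (Set.Ioi 0) := by
  have hM : 0 ≤ M := by linarith [hw1 0, hw2 0]
  intro ω hω
  have hω' : 0 < ω := hω
  refine ContinuousAt.continuousWithinAt ?_
  rw [ContinuousAt, tendsto_iff_dist_tendsto_zero]
  set K : NNReal := ⟨2 * M / ω, by positivity⟩ with hK
  have hlim : Filter.Tendsto (fun η => gronwallBound 0 K (0 + (|η - ω| + M * |1/η - 1/ω|)) (π / 2 - 0))
      (nhds ω) (nhds 0) := by
    have h1 : Filter.Tendsto (fun η => 0 + (|η - ω| + M * |1/η - 1/ω|)) (nhds ω) (nhds 0) := by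
      have hc : ContinuousAt (fun η => 0 + (|η - ω| + M * |1/η - 1/ω|)) ω := by
        have : ContinuousAt (fun η : ℝ => 1/η) ω := by
          simpa using continuousAt_inv₀ hω'.ne'
        fun_prop
      have := hc.tendsto
      simpa using this
    have h2 := (gronwallBound_continuous_ε 0 K (π / 2 - 0)).tendsto 0
    rw [gronwallBound_ε0_δ0] at h2
    exact h2.comp h1
  refine squeeze_zero' (Filter.Eventually.of_forall fun _ => dist_nonneg) ?_ hlim
  filter_upwards [Ioi_mem_nhds hω'] with η hη
  have hη' : 0 < η := hη
  rw [dist_comm]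
  refine dist_le_of_approx_trajectories_ODE (v := fun t θ => ω - w t * sin θ ^ 2 / ω)
    (f := Θ ω) (g := Θ η) (a := 0) (b := π / 2)
    (prufer_lip w M hM hw1 hw2 ω hω')
    (fun x _ => (hθ ω hω' x).continuousAt.continuousWithinAt)
    (fun x _ => (hθ ω hω' x).hasDerivWithinAt) (fun x _ => by simp)
    (fun x _ => (hθ η hη' x).continuousAt.continuousWithinAt)
    (fun x _ => (hθ η hη' x).hasDerivWithinAt) (fun x _ => ?_)
    (by rw [h0 ω hω', h0 η hη']; simp) (π/2) (Set.right_mem_Icc.mpr (by positivity))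
  rw [Real.dist_eq]
  have e : η - w x * sin (Θ η x) ^ 2 / η - (ω - w x * sin (Θ η x) ^ 2 / ω) =
      (η - ω) - (w x * sin (Θ η x) ^ 2) * (1 / η - 1 / ω) := by ring
  rw [e]
  refine (abs_sub _ _).trans ?_
  rw [abs_mul]
  have h1 := hw1 x
  have h2 := hw2 x
  have : |w x * sin (Θ η x) ^ 2| ≤ M := by
    rw [abs_of_nonneg (by positivity)]
    nlinarith [sin_sq_le_one (Θ η x), sq_nonneg (sin (Θ η x))]
  gcongr

theorem energy_no (w : ℝ → ℝ) (M : ℝ) (hw1 : ∀ x, 1 ≤ w x) (hw2 : ∀ x, w x ≤ M) (κ : ℝ) (hκ : κ < 1) (z z1 : ℝ → ℝ)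
    (h1 : ∀ x, HasDerivAt z (z1 x) x) (h2 : ∀ x, HasDerivAt z1 ((w x - κ) * z x) x)
    (hz1 : z1 0 = 0) (hz : z (π / 2) = 0) : z 0 = 0 := by
  by_contra hne
  have hd : ∀ x, HasDerivAt (fun x => z x * z1 x) (z1 x * z1 x + z x * ((w x - κ) * z x)) x :=
    fun x => (h1 x).mul (h2 x)
  have hlt := ode_compare (fun _ => 0) (fun x => z x * z1 x + 0) (fun _ => 0) _ (π/2)
    (fun x => hasDerivAt_const x 0) (fun x => (hd x).add_const 0) (by simp [hz1]) ?_ (by positivity)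
  · simp [hz] at hlt
  · intro x hx
    have := hw1 x
    have hwk : 0 < w x - κ := by linarith
    have hnn : 0 ≤ z1 x * z1 x + z x * ((w x - κ) * z x) := by
      nlinarith [mul_nonneg hwk.le (sq_nonneg (z x)), sq_nonneg (z1 x)]
    rcases hnn.lt_or_eq with h | h
    · exact h
    exfalso
    have hA := mul_nonneg hwk.le (sq_nonneg (z x))
    have hB := sq_nonneg (z1 x)
    have hz1x : z1 x = 0 := by
      have : z1 x ^ 2 = 0 := by nlinarith
      simpa using this
    have hzx : z x = 0 := by
      have : (w x - κ) * z x ^ 2 = 0 := by nlinarith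
      rcases mul_eq_zero.mp this with h | h
      · linarith
      · simpa using h
    refine hne (lin_unique (fun x => w x - κ) (M + |κ|) (fun x => ?_) z z1 h1 h2 x hzx hz1x 0).1
    have h3 := hw1 x
    have h4 := hw2 x
    refine (abs_sub _ _).trans ?_
    rw [abs_of_nonneg (by linarith : 0 ≤ w x)]
    linarith

theorem sturm (w : ℝ → ℝ) (M : ℝ) (hw : Continuous w) (hw1 : ∀ x, 1 ≤ w x)
    (hw2 : ∀ x, w x ≤ M) :
    ∃ (ω : ℕ → ℝ) (y y1 : ℕ → ℝ → ℝ) (C : ℝ), StrictMono ω ∧ (∀ k, 0 < ω k) ∧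
      (∀ k : ℕ, 2 * (k:ℝ) + 1 ≤ ω k ∧ ω k ≤ 2 * (k:ℝ) + 1 + M / (2 * k + 1)) ∧
      (∀ k x, HasDerivAt (y k) (y1 k x) x) ∧
      (∀ k x, HasDerivAt (y1 k) ((w x - ω k ^ 2) * y k x) x) ∧
      (∀ k, y k 0 = 1) ∧ (∀ k, y1 k 0 = 0) ∧ (∀ k, y k (π / 2) = 0) ∧
      (∀ k x, 0 ≤ x → x ≤ π / 2 → |y k x - cos ((2 * (k:ℝ) + 1) * x)| ≤ C / (2 * k + 1)) ∧
      (∀ (κ : ℝ) (z z1 : ℝ → ℝ), (∀ x, HasDerivAt z (z1 x) x) →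
        (∀ x, HasDerivAt z1 ((w x - κ) * z x) x) → z1 0 = 0 → z (π / 2) = 0 → z 0 ≠ 0 →
        ∃ k, κ = ω k ^ 2) := by
  have hM1 : 1 ≤ M := (hw1 0).trans (hw2 0)
  have hM : 0 ≤ M := by linarith
  have hex := prufer_exists w M hw hw1 hw2
  choose! Θ h0 hΘ using hex
  have hpi2 : 0 < π / 2 := by positivity
  have hmono : ∀ ω ω', 0 < ω → ω < ω' → Θ ω (π/2) < Θ ω' (π/2) := fun ω ω' h h' =>
    prufer_mono w hw1 ω ω' h h' _ _ (h0 ω h) (h0 ω' (h.trans h')) (hΘ ω h) (hΘ ω' (h.trans h')) _ hpi2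
  have hcont := prufer_cont w M hw1 hw2 Θ h0 hΘ
  have hbd := fun ω (h : 0 < ω) => prufer_bounds w M hw1 hw2 ω h (Θ ω) (h0 ω h) (hΘ ω h)
  have hivt : ∀ k : ℕ, ∃ ω, 0 < ω ∧ Θ ω (π/2) = π * (k + 1) := by
    intro k
    set b : ℝ := 2 * k + 2 + M with hb
    have hb2 : (1:ℝ)/2 ≤ b := by rw [hb]; linarith [k.cast_nonneg (α := ℝ)]
    have hbpos : 0 < b := by linarith
    have hc : ContinuousOn (fun ω => Θ ω (π / 2)) (Set.Icc (1/2) b) :=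
      hcont.mono fun x hx => lt_of_lt_of_le (by norm_num) hx.1
    have hl := (hbd (1/2) (by norm_num) (π/2) hpi2.le).1
    have hu := (hbd b hbpos (π/2) hpi2.le).2
    have hMb : M / b ≤ 1 := by rw [div_le_one hbpos, hb]; linarith [k.cast_nonneg (α := ℝ)]
    have hmem : π * ((k:ℝ) + 1) ∈ Set.Icc (Θ (1/2) (π/2)) (Θ b (π/2)) := by
      have hk := k.cast_nonneg (α := ℝ)
      constructor
      · nlinarith [pi_pos]
      · have : π * ((k:ℝ) + 1) ≤ π/2 + (b - M/b) * (π/2) := by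
          have : 2 * (k:ℝ) + 1 ≤ b - M / b := by rw [hb] at *; linarith
          nlinarith [pi_pos]
        linarith
    obtain ⟨ω, hω, hω2⟩ := intermediate_value_Icc hb2 hc hmem
    exact ⟨ω, lt_of_lt_of_le (by norm_num) hω.1, hω2⟩
  choose ω hωpos hω using hivt
  have hωN : ∀ k : ℕ, 2 * (k:ℝ) + 1 ≤ ω k := by
    intro k
    have := (hbd (ω k) (hωpos k) (π/2) hpi2.le).1
    rw [hω] at this
    have h3 : π * (2 * (k:ℝ) + 1) ≤ π * ω k := by linarith
    exact le_of_mul_le_mul_left h3 pi_pos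
  have hωU0 : ∀ k : ℕ, ω k ≤ 2 * (k:ℝ) + 1 + M / ω k := by
    intro k
    have := (hbd (ω k) (hωpos k) (π/2) hpi2.le).2
    rw [hω] at this
    have h3 : π * (ω k - M / ω k) ≤ π * (2 * (k:ℝ) + 1) := by linarith
    have := le_of_mul_le_mul_left h3 pi_pos
    linarith
  have hMω : ∀ k : ℕ, M / ω k ≤ M / (2 * k + 1) := fun k => by
    have := hωN k
    gcongr
  have hr := fun ω (h : 0 < ω) => prufer_sol w hw ω h (Θ ω) (h0 ω h) (hΘ ω h)
  choose! r hr1 hr2 hr3 hr4 hr5 using hr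
  have hrb : ∀ k x, 0 ≤ x → x ≤ π/2 → |r (ω k) x - 1| ≤ (2 * M * exp (2 * M)) / (2 * k + 1) := by
    intro k x hx0 hx1
    rw [hr1 _ (hωpos k)]
    set I := ∫ s in (0:ℝ)..x, w s / ω k * sin (Θ (ω k) s) * cos (Θ (ω k) s) with hI
    have hIb : |I| ≤ M / ω k * 2 := by
      have := intervalIntegral.norm_integral_le_of_norm_le_const (a := 0) (b := x)
        (f := fun s => w s / ω k * sin (Θ (ω k) s) * cos (Θ (ω k) s)) (C := M / ω k) ?_
      · rw [Real.norm_eq_abs] at this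
        refine this.trans ?_
        have hωk := hωpos k
        gcongr
        rw [sub_zero, abs_of_nonneg hx0]
        linarith [pi_le_four]
      · intro s _
        rw [Real.norm_eq_abs, abs_mul, abs_mul]
        have hωk := hωpos k
        have : |w s / ω k| ≤ M / ω k := by
          rw [abs_of_nonneg (div_nonneg (by linarith [hw1 s]) hωk.le)]
          gcongr; exact hw2 s
        calc |w s / ω k| * |sin (Θ (ω k) s)| * |cos (Θ (ω k) s)| ≤ M / ω k * 1 * 1 := by
              gcongr
              · exact abs_sin_le_one _
              · exact abs_cos_le_one _
          _ = M / ω k := by ring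
    have hI2 : |I| ≤ 2 * M / (2 * k + 1) := by
      refine hIb.trans ?_
      have := hMω k
      rw [mul_comm, mul_div_assoc]
      linarith
    have hI3 : |I| ≤ 2 * M := by
      refine hI2.trans (div_le_self (by positivity) ?_)
      linarith [k.cast_nonneg (α := ℝ)]
    have hexp : |exp I - 1| ≤ |I| * exp |I| := by
      rcases le_total 0 I with h | h
      · rw [abs_of_nonneg h, abs_of_nonneg (by linarith [add_one_le_exp I])]
        have h4 := add_one_le_exp (-I)
        have h5 : exp I * exp (-I) = 1 := by rw [← exp_add]; simp
        nlinarith [exp_pos I]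
      · rw [abs_of_nonpos h, abs_of_nonpos (by simpa using h)]
        have h4 := add_one_le_exp I
        have h5 : 1 ≤ exp (-I) := one_le_exp (by linarith)
        nlinarith
    calc |exp I - 1| ≤ |I| * exp |I| := hexp
      _ ≤ 2 * M / (2 * k + 1) * exp (2 * M) := by gcongr
      _ = _ := by ring
  refine ⟨ω, fun k x => r (ω k) x * sin (Θ (ω k) x), fun k x => ω k * (r (ω k) x * cos (Θ (ω k) x)),
    2 * M * exp (2 * M) + 4 * M, ?_, hωpos, fun k => ⟨hωN k, ?_⟩, fun k x => hr2 _ (hωpos k) x,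
    fun k x => hr3 _ (hωpos k) x, fun k => hr4 _ (hωpos k), fun k => hr5 _ (hωpos k), ?_, ?_, ?_⟩
  · intro k l hkl
    by_contra hcon
    push Not at hcon
    have hle : Θ (ω l) (π/2) ≤ Θ (ω k) (π/2) := by
      rcases hcon.lt_or_eq with h | h
      · exact (hmono _ _ (hωpos l) h).le
      · rw [h]
    rw [hω, hω] at hle
    have : (k:ℝ) < l := by exact_mod_cast hkl
    nlinarith [pi_pos]
  · linarith [hωU0 k, hMω k]
  · intro k
    simp only [hω]
    have : sin (π * ((k:ℝ) + 1)) = 0 := by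
      have := sin_nat_mul_pi (k+1)
      push_cast at this
      rw [mul_comm]; exact this
    rw [this, mul_zero]
  · intro k x hx0 hx1
    have h1 := hrb k x hx0 hx1
    have h2 := hbd (ω k) (hωpos k) x hx0
    have hx2 : x ≤ 2 := by linarith [pi_le_four]
    have hN := hωN k
    have hU := hωU0 k
    have hMk := hMω k
    have hk0 : (0:ℝ) < 2 * k + 1 := by positivity
    have hMp : 0 ≤ M / ω k := div_nonneg hM (hωpos k).le
    have h3 : |Θ (ω k) x - (π/2 + (2 * (k:ℝ) + 1) * x)| ≤ 4 * M / (2 * k + 1) := by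
      have e : 4 * M / (2 * (k:ℝ) + 1) = 4 * (M / (2 * k + 1)) := by ring
      rw [e, abs_le]
      constructor
      · nlinarith [mul_nonneg (sub_nonneg.mpr hN) hx0, mul_le_mul_of_nonneg_left hx2 hMp]
      · nlinarith [mul_le_mul_of_nonneg_left hx2 hMp,
          mul_le_mul_of_nonneg_right hU hx0]
    have h4 : |sin (Θ (ω k) x) - cos ((2 * (k:ℝ) + 1) * x)| ≤ 4 * M / (2 * k + 1) := by
      rw [← sin_add_pi_div_two, add_comm]
      exact (abs_sin_sub_sin_le _ _).trans h3
    have e : r (ω k) x * sin (Θ (ω k) x) - cos ((2 * (k:ℝ) + 1) * x) =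
      (r (ω k) x - 1) * sin (Θ (ω k) x) + (sin (Θ (ω k) x) - cos ((2 * (k:ℝ) + 1) * x)) := by ring
    rw [e, add_div]
    refine (abs_add_le _ _).trans (add_le_add ?_ h4)
    rw [abs_mul]
    calc _ ≤ |r (ω k) x - 1| * 1 := by gcongr; exact abs_sin_le_one _
      _ ≤ _ := by rw [mul_one]; exact h1
  · intro κ z z1 hz hz1 hz10 hzpi hz0
    have hκ : 1/4 < κ := by
      by_contra hcon
      exact hz0 (energy_no w M hw1 hw2 κ (by linarith) z z1 hz hz1 hz10 hzpi)
    have hsq : 0 < √κ := sqrt_pos.mpr (by linarith)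
    have hsq2 : √κ ^ 2 = κ := sq_sqrt (by linarith)
    have huniq := lin_unique (fun x => w x - κ) (M + |κ|) (fun x => ?_)
      (fun x => z x - z 0 * (r √κ x * sin (Θ √κ x)))
      (fun x => z1 x - z 0 * (√κ * (r √κ x * cos (Θ √κ x))))
      (fun x => (hz x).sub ((hr2 √κ hsq x).const_mul _))
      (fun x => ((hz1 x).sub ((hr3 √κ hsq x).const_mul _)).congr_deriv ?_) 0
      (by rw [hr4 √κ hsq]; ring) (by rw [hr5 √κ hsq, hz10]; ring) (π/2)
    · have h1 := huniq.1
      simp only [hzpi, zero_sub, neg_eq_zero] at h1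
      have hrne : r √κ (π/2) ≠ 0 := by rw [hr1 _ hsq]; exact (exp_pos _).ne'
      have hsin : sin (Θ √κ (π/2)) = 0 := by
        simpa [hz0, hrne] using h1
      obtain ⟨n, hn⟩ := sin_eq_zero_iff.mp hsin
      have hpos := prufer_pos w √κ hsq (Θ √κ) (h0 _ hsq) (hΘ _ hsq) (π/2) hpi2
      rw [← hn] at hpos
      have hnpos : 0 < n := by
        have : (0:ℝ) < n := pos_of_mul_pos_left hpos pi_pos.le
        exact_mod_cast this
      refine ⟨(n - 1).toNat, ?_⟩
      set k := (n-1).toNat with hk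
      have hkn : (k:ℤ) = n - 1 := Int.toNat_of_nonneg (by linarith)
      have hkr : (n:ℝ) = k + 1 := by
        have : ((k:ℤ):ℝ) = ((n - 1 : ℤ) : ℝ) := by rw [hkn]
        push_cast at this
        linarith
      have heq : Θ √κ (π/2) = Θ (ω k) (π/2) := by rw [hω, ← hn, hkr, mul_comm]
      have : √κ = ω k := by
        rcases lt_trichotomy √κ (ω k) with h | h | h
        · exact absurd heq (hmono _ _ hsq h).ne
        · exact h
        · exact absurd heq (hmono _ _ (hωpos k) h).ne'
      rw [← this, hsq2]
    · have h3 := hw1 x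
      have h4 := hw2 x
      refine (abs_sub _ _).trans ?_
      rw [abs_of_nonneg (by linarith : 0 ≤ w x)]
      linarith
    · rw [hsq2]; ring

end WH

namespace WH

theorem count_lt (e o lamM : ℕ → ℝ) (he : StrictMono e) (ho : StrictMono o)
    (hmono : MonotoneOn lamM {n : ℕ | 1 ≤ n})
    (hmem : ∀ n, 1 ≤ n → lamM n ∈ Set.range e ∨ lamM n ∈ Set.range o)
    (mult : ℝ → ℕ)
    (hmult : ∀ lam, mult lam = (open Classical in if lam ∈ Set.range e then 1 else 0) +
      (open Classical in if lam ∈ Set.range o then 1 else 0))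
    (hcard : ∀ lam : ℝ, Nat.card {n : ℕ // 1 ≤ n ∧ lamM n = lam} = mult lam)
    (T : ℝ) (K : ℕ) (heT : ∀ j, e j < T ↔ j < K) (hoT : ∀ j, o j < T ↔ j < K) (n : ℕ) (hn : 1 ≤ n) :
    lamM n < T ↔ n ≤ 2 * K := by
  classical
  set E : Finset ℝ := (Finset.range K).image e ∪ (Finset.range K).image o with hE
  have hEmem : ∀ lam, lam ∈ E ↔ (lam < T ∧ (lam ∈ Set.range e ∨ lam ∈ Set.range o)) := by
    intro lam
    simp only [hE, Finset.mem_union, Finset.mem_image, Finset.mem_range, Set.mem_range]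
    constructor
    · rintro (⟨j, hj, rfl⟩ | ⟨j, hj, rfl⟩)
      · exact ⟨(heT j).2 hj, Or.inl ⟨j, rfl⟩⟩
      · exact ⟨(hoT j).2 hj, Or.inr ⟨j, rfl⟩⟩
    · rintro ⟨h, (⟨j, rfl⟩ | ⟨j, rfl⟩)⟩
      · exact Or.inl ⟨j, (heT j).1 h, rfl⟩
      · exact Or.inr ⟨j, (hoT j).1 h, rfl⟩
  have hfin : ∀ lam ∈ E, Set.Finite {n : ℕ | 1 ≤ n ∧ lamM n = lam} := by
    intro lam hlam
    have h1 := hcard lam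
    rw [hmult lam] at h1
    have h2 : 0 < Nat.card {n : ℕ // 1 ≤ n ∧ lamM n = lam} := by
      rw [h1]
      rcases ((hEmem lam).1 hlam).2 with h | h <;> simp [h]
    have := (Nat.card_pos_iff.1 h2).2
    exact Set.finite_coe_iff.1 this
  set S : Set ℕ := {n : ℕ | 1 ≤ n ∧ lamM n < T} with hS
  have hSfin : S.Finite := by
    refine Set.Finite.subset (Set.Finite.biUnion E.finite_toSet (fun lam hlam => hfin lam hlam)) ?_
    rintro n ⟨h1, h2⟩
    simp only [Set.mem_iUnion]
    exact ⟨lamM n, (hEmem _).2 ⟨h2, hmem n h1⟩, h1, rfl⟩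
  have hcS : hSfin.toFinset.card = 2 * K := by
    rw [Finset.card_eq_sum_card_fiberwise (f := lamM) (t := E)]
    · have h1 : ∀ lam ∈ E, (hSfin.toFinset.filter (fun n => lamM n = lam)).card =
          (if lam ∈ Set.range e then 1 else 0) + (if lam ∈ Set.range o then 1 else 0) := by
        intro lam hlam
        rw [← hmult lam, ← hcard lam]
        rw [← Nat.card_eq_finsetCard]
        apply Nat.card_congr
        refine Equiv.subtypeEquivRight ?_
        intro n
        simp only [Finset.mem_filter, Set.Finite.mem_toFinset, hS, Set.mem_ofPred_eq]
        constructor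
        · rintro ⟨⟨a, b⟩, c⟩; exact ⟨a, c⟩
        · rintro ⟨a, c⟩; exact ⟨⟨a, by rw [c]; exact ((hEmem lam).1 hlam).1⟩, c⟩
      rw [Finset.sum_congr rfl h1, Finset.sum_add_distrib, ← Finset.card_filter, ← Finset.card_filter]
      have h2 : E.filter (fun lam => lam ∈ Set.range e) = (Finset.range K).image e := by
        ext lam
        simp only [Finset.mem_filter, hEmem, Finset.mem_image, Finset.mem_range, Set.mem_range]
        constructor
        · rintro ⟨⟨h, _⟩, j, rfl⟩; exact ⟨j, (heT j).1 h, rfl⟩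
        · rintro ⟨j, hj, rfl⟩; exact ⟨⟨(heT j).2 hj, Or.inl ⟨j, rfl⟩⟩, j, rfl⟩
      have h3 : E.filter (fun lam => lam ∈ Set.range o) = (Finset.range K).image o := by
        ext lam
        simp only [Finset.mem_filter, hEmem, Finset.mem_image, Finset.mem_range, Set.mem_range]
        constructor
        · rintro ⟨⟨h, _⟩, j, rfl⟩; exact ⟨j, (hoT j).1 h, rfl⟩
        · rintro ⟨j, hj, rfl⟩; exact ⟨⟨(hoT j).2 hj, Or.inr ⟨j, rfl⟩⟩, j, rfl⟩
      rw [h2, h3, Finset.card_image_of_injective _ he.injective,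
        Finset.card_image_of_injective _ ho.injective]
      simp; ring
    · intro n hn
      have : n ∈ S := by simpa using hn
      exact (hEmem _).2 ⟨this.2, hmem n this.1⟩
  constructor
  · intro h
    have : Finset.Icc 1 n ⊆ hSfin.toFinset := by
      intro j hj
      rw [Finset.mem_Icc] at hj
      rw [Set.Finite.mem_toFinset]
      exact ⟨hj.1, lt_of_le_of_lt (hmono hj.1 hn hj.2) h⟩
    have := Finset.card_le_card this
    rw [hcS] at this
    simpa using this
  · intro h
    by_contra hlt
    have : hSfin.toFinset ⊆ Finset.Icc 1 (n-1) := by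
      intro j hj
      rw [Set.Finite.mem_toFinset] at hj
      rw [Finset.mem_Icc]
      refine ⟨hj.1, ?_⟩
      by_contra h'
      have : n ≤ j := by omega
      exact hlt (lt_of_le_of_lt (hmono hn hj.1 this) hj.2)
    have := Finset.card_le_card this
    rw [hcS] at this
    simp at this
    omega

theorem enum_gap (e o lamM : ℕ → ℝ) (he : StrictMono e) (ho : StrictMono o)
    (hmono : MonotoneOn lamM {n : ℕ | 1 ≤ n})
    (hmem : ∀ n, 1 ≤ n → lamM n ∈ Set.range e ∨ lamM n ∈ Set.range o)
    (mult : ℝ → ℕ)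
    (hmult : ∀ lam, mult lam = (open Classical in if lam ∈ Set.range e then 1 else 0) +
      (open Classical in if lam ∈ Set.range o then 1 else 0))
    (hcard : ∀ lam : ℝ, Nat.card {n : ℕ // 1 ≤ n ∧ lamM n = lam} = mult lam)
    (R : ℝ) (heR : ∀ k : ℕ, |e k - (2*(k:ℝ)+1)^2| ≤ R) (hoR : ∀ k : ℕ, |o k - (2*(k:ℝ)+1)^2| ≤ R) :
    ∃ K0 : ℕ, ∀ K, K0 ≤ K → lamM (2*K+2) - lamM (2*K+1) = |e K - o K| := by
  classical
  have key : ∀ (f : ℕ → ℝ), StrictMono f → (∀ k : ℕ, |f k - (2*(k:ℝ)+1)^2| ≤ R) → ∀ K : ℕ, R + 1 < K →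
      ∀ j, f j < (2*(K:ℝ))^2 ↔ j < K := by
    intro f hf hfR K hK j
    constructor
    · intro h
      by_contra h'
      have h1 : f K ≤ f j := hf.monotone (by omega)
      have h2 := (abs_le.1 (hfR K)).1
      nlinarith
    · intro h
      obtain ⟨K', rfl⟩ : ∃ K', K = K' + 1 := ⟨K - 1, by omega⟩
      have h1 : f j ≤ f K' := hf.monotone (by omega)
      have h2 := (abs_le.1 (hfR K')).2
      push_cast at hK ⊢
      nlinarith
  obtain ⟨K0, hK0⟩ := exists_nat_gt (R+1)
  refine ⟨K0, fun K hK => ?_⟩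
  have hKR : R + 1 < K := lt_of_lt_of_le hK0 (by exact_mod_cast hK)
  have hKR' : R + 1 < ((K+1 : ℕ):ℝ) := by push_cast; linarith
  have c1 := count_lt e o lamM he ho hmono hmem mult hmult hcard _ K (key e he heR K hKR) (key o ho hoR K hKR)
  have c2 := count_lt e o lamM he ho hmono hmem mult hmult hcard _ (K+1) (key e he heR _ hKR') (key o ho hoR _ hKR')
  have hval : ∀ n, 1 ≤ n → (2*K < n ∧ n ≤ 2*K+2 ↔ (lamM n = e K ∨ lamM n = o K)) := by
    intro n hn
    have a1 := c1 n hn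
    have a2 := c2 n hn
    constructor
    · rintro ⟨h1, h2⟩
      have b1 : ¬ lamM n < (2*(K:ℝ))^2 := by rw [a1]; omega
      have b2 : lamM n < (2*((K+1:ℕ):ℝ))^2 := by rw [a2]; omega
      rcases hmem n hn with ⟨j, hj⟩ | ⟨j, hj⟩
      · left
        rw [← hj] at b1 b2 ⊢
        rw [key e he heR K hKR] at b1
        rw [key e he heR _ hKR'] at b2
        congr 1; omega
      · right
        rw [← hj] at b1 b2 ⊢
        rw [key o ho hoR K hKR] at b1
        rw [key o ho hoR _ hKR'] at b2
        congr 1; omega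
    · intro h
      have b1 : ¬ lamM n < (2*(K:ℝ))^2 := by
        rcases h with h | h <;> rw [h]
        · rw [key e he heR K hKR]; omega
        · rw [key o ho hoR K hKR]; omega
      have b2 : lamM n < (2*((K+1:ℕ):ℝ))^2 := by
        rcases h with h | h <;> rw [h]
        · rw [key e he heR _ hKR']; omega
        · rw [key o ho hoR _ hKR']; omega
      rw [a1] at b1; rw [a2] at b2; omega
  have v1 := (hval (2*K+1) (by omega)).1 ⟨by omega, by omega⟩
  have v2 := (hval (2*K+2) (by omega)).1 ⟨by omega, by omega⟩
  have hle : lamM (2*K+1) ≤ lamM (2*K+2) := hmono (by simp) (by simp) (by omega)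
  by_cases heq : e K = o K
  · rw [← heq] at v1 v2 ⊢
    have : lamM (2*K+1) = e K := by tauto
    have : lamM (2*K+2) = e K := by tauto
    simp [*]
  · have hne : lamM (2*K+1) ≠ lamM (2*K+2) := by
      intro h
      have hm : mult (lamM (2*K+1)) = 1 := by
        rw [hmult]
        have q1 : ¬ (e K ∈ Set.range o) := by
          rintro ⟨j, hj⟩
          have i1 := key o ho hoR K hKR j
          have i2 := key o ho hoR _ hKR' j
          rw [hj, key e he heR K hKR] at i1
          rw [hj, key e he heR _ hKR'] at i2
          have : j = K := by omega
          exact heq (by rw [← hj, this])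
        have q2 : ¬ (o K ∈ Set.range e) := by
          rintro ⟨j, hj⟩
          have i1 := key e he heR K hKR j
          have i2 := key e he heR _ hKR' j
          rw [hj, key o ho hoR K hKR] at i1
          rw [hj, key o ho hoR _ hKR'] at i2
          have : j = K := by omega
          exact heq (by rw [← hj, this])
        rcases v1 with h | h <;> rw [h]
        · rw [if_neg q1, if_pos ⟨K, rfl⟩]
        · rw [if_neg q2, if_pos ⟨K, rfl⟩]
      rw [← hcard, Nat.card_eq_one_iff_unique] at hm
      have := hm.1.elim ⟨2*K+1, by omega, rfl⟩ ⟨2*K+2, by omega, h.symm⟩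
      simp at this
    rcases v1 with h1 | h1 <;> rcases v2 with h2 | h2 <;> rw [h1, h2] at hne hle ⊢
    · exact absurd rfl hne
    · rw [abs_sub_comm, abs_of_nonneg (by linarith)]
    · rw [abs_of_nonneg (by linarith)]
    · exact absurd rfl hne
end WH

namespace WH

structure EvenSol (v : ℝ → ℝ) (lam : ℝ) (z z1 : ℝ → ℝ) : Prop where
  h1 : ∀ x, HasDerivAt z (z1 x) x
  h2 : ∀ x, HasDerivAt z1 ((v x - lam) * z x) x
  d0 : z1 0 = 0
  e0 : z (π/2) = 0

def EvenEig (v : ℝ → ℝ) (lam : ℝ) : Prop := ∃ z z1, EvenSol v lam z z1 ∧ z 0 ≠ 0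

theorem uniq (v : ℝ → ℝ) (V : ℝ) (hV : ∀ x, |v x| ≤ V) (lam : ℝ) (z z1 u u1 : ℝ → ℝ) (c x0 : ℝ)
    (h1 : ∀ x, HasDerivAt z (z1 x) x) (h2 : ∀ x, HasDerivAt z1 ((v x - lam) * z x) x)
    (g1 : ∀ x, HasDerivAt u (u1 x) x) (g2 : ∀ x, HasDerivAt u1 ((v x - lam) * u x) x)
    (e : z x0 = c * u x0) (e1 : z1 x0 = c * u1 x0) (x : ℝ) : z x = c * u x := by
  have := lin_unique (fun x => v x - lam) (V + |lam|) (fun x => by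
      calc |v x - lam| ≤ |v x| + |lam| := abs_sub _ _
        _ ≤ _ := by linarith [hV x]) (fun x => z x - c * u x) (fun x => z1 x - c * u1 x)
      (fun x => (h1 x).sub ((g1 x).const_mul c))
      (fun x => ((h2 x).sub ((g2 x).const_mul c)).congr_deriv (by ring)) x0 (by simp [e]) (by simp [e1]) x
  linarith [this.1]

theorem EvenSol.even {v : ℝ → ℝ} {V : ℝ} (hV : ∀ x, |v x| ≤ V) (hev : ∀ x, v (-x) = v x) {lam : ℝ}
    {z z1 : ℝ → ℝ} (h : EvenSol v lam z z1) (x : ℝ) : z (-x) = z x := by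
  have := uniq v V hV lam (fun x => z (-x)) (fun x => - z1 (-x)) z z1 1 0
    (fun x => ((h.h1 (-x)).comp x (hasDerivAt_neg x)).congr_deriv (by ring))
    (fun x => (((h.h2 (-x)).comp x (hasDerivAt_neg x)).neg).congr_deriv (by rw [hev]; ring))
    h.h1 h.h2 (by simp) (by simp [h.d0]) x
  simpa using this

theorem EvenSol.anti {v : ℝ → ℝ} {V : ℝ} (hV : ∀ x, |v x| ≤ V) (hev : ∀ x, v (-x) = v x)
    (hper : ∀ x, v (x + π) = v x) {lam : ℝ}
    {z z1 : ℝ → ℝ} (h : EvenSol v lam z z1) (x : ℝ) : z (x + π) = - z x := by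
  have := uniq v V hV lam (fun x => z (π-x)) (fun x => - z1 (π-x)) z z1 (-1) (π/2)
    (fun x => ((h.h1 (π-x)).comp x ((hasDerivAt_id x).const_sub π)).congr_deriv (by simp))
    (fun x => (((h.h2 (π-x)).comp x ((hasDerivAt_id x).const_sub π)).neg).congr_deriv (by
      rw [show π - x = -x + π by ring, hper, hev]; ring))
    h.h1 h.h2 (by
      have : π - π/2 = π/2 := by ring
      simp [this, h.e0]) (by 
      have : π - π/2 = π/2 := by ring
      simp [this]) (-x)
  rw [show π - -x = x + π by ring] at this
  rw [this, h.even hV hev]; ring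

theorem EvenSol.semi {v : ℝ → ℝ} (hv : Continuous v) {V : ℝ} (hV : ∀ x, |v x| ≤ V) (hev : ∀ x, v (-x) = v x)
    (hper : ∀ x, v (x + π) = v x) {lam : ℝ}
    {z z1 : ℝ → ℝ} (h : EvenSol v lam z z1) : IsSemiEF v lam z := by
  have d1 : deriv z = z1 := funext fun x => (h.h1 x).deriv
  have d2 : deriv z1 = fun x => (v x - lam) * z x := funext fun x => (h.h2 x).deriv
  have cz : Continuous z := continuous_iff_continuousAt.2 fun x => (h.h1 x).continuousAt
  refine ⟨?_, ?_, h.anti hV hev hper⟩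
  · rw [show (2 : WithTop ℕ∞) = 1 + 1 by norm_num, contDiff_succ_iff_deriv]
    refine ⟨fun x => (h.h1 x).differentiableAt, by simp, ?_⟩
    rw [d1, contDiff_one_iff_deriv, d2]
    exact ⟨fun x => (h.h2 x).differentiableAt, by fun_prop⟩
  · intro x; rw [d1, d2]; ring

theorem semi_deriv {v : ℝ → ℝ} {lam : ℝ} {f : ℝ → ℝ} (h : IsSemiEF v lam f) :
    (∀ x, HasDerivAt f (deriv f x) x) ∧ (∀ x, HasDerivAt (deriv f) ((v x - lam) * f x) x) ∧
    (∀ x, deriv f (x + π) = - deriv f x) := by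
  obtain ⟨h1, h2, h3⟩ := h
  rw [show (2 : WithTop ℕ∞) = 1 + 1 by norm_num, contDiff_succ_iff_deriv] at h1
  obtain ⟨a, -, b⟩ := h1
  rw [contDiff_one_iff_deriv] at b
  refine ⟨fun x => (a x).hasDerivAt, fun x => ?_, fun x => ?_⟩
  · have := (b.1 x).hasDerivAt
    refine this.congr_deriv ?_
    linarith [h2 x]
  · have e1 : HasDerivAt (fun x => f (x + π)) (deriv f (x+π)) x := by
      simpa using ((a (x+π)).hasDerivAt).comp_add_const x π
    have e2 : HasDerivAt (fun x => f (x + π)) (- deriv f x) x := by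
      simp only [h3]; exact (a x).hasDerivAt.neg
    exact e1.unique e2

theorem shift_semi {v : ℝ → ℝ} {lam : ℝ} {f : ℝ → ℝ} (s : ℝ) (h : IsSemiEF v lam f) :
    IsSemiEF (fun x => v (x + s)) lam (fun x => f (x + s)) := by
  obtain ⟨h1, h2, h3⟩ := h
  have d1 : deriv (fun x => f (x + s)) = fun x => deriv f (x + s) := by
    funext x; exact deriv_comp_add_const f s x
  have d2 : deriv (fun x => deriv f (x + s)) = fun x => deriv (deriv f) (x + s) := by
    funext x; exact deriv_comp_add_const (deriv f) s x
  refine ⟨h1.comp (contDiff_id.add contDiff_const), fun x => ?_, fun x => ?_⟩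
  · rw [d1, d2]; exact h2 (x+s)
  · beta_reduce; rw [show x + π + s = x + s + π by ring]; exact h3 _

/-- even part of a semi-periodic solution -/
theorem even_part {v : ℝ → ℝ} (hev : ∀ x, v (-x) = v x) {lam : ℝ} {f : ℝ → ℝ} (h : IsSemiEF v lam f) :
    EvenSol v lam (fun x => (f x + f (-x))/2) (fun x => (deriv f x - deriv f (-x))/2) := by
  obtain ⟨h1, h2, h3⟩ := semi_deriv h
  constructor
  · intro x
    exact (((h1 x).add ((h1 (-x)).comp x (hasDerivAt_neg x))).div_const 2).congr_deriv (by ring)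
  · intro x
    exact (((h2 x).sub ((h2 (-x)).comp x (hasDerivAt_neg x))).div_const 2).congr_deriv (by rw [hev]; ring)
  · simp
  · have := h.2.2 (-(π/2))
    rw [show -(π/2)+π = π/2 by ring] at this
    simp [this]

/-- odd part of a semi-periodic solution, shifted -/
theorem odd_part {v : ℝ → ℝ} (hev : ∀ x, v (-x) = v x) (hper : ∀ x, v (x + π) = v x) {lam : ℝ} {f : ℝ → ℝ} (h : IsSemiEF v lam f) :
    EvenSol (fun x => v (x + π/2)) lam (fun x => (f (x+π/2) - f (-(x+π/2)))/2)
      (fun x => (deriv f (x+π/2) + deriv f (-(x+π/2)))/2) := by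
  obtain ⟨h1, h2, h3⟩ := semi_deriv h
  have hs : ∀ x : ℝ, HasDerivAt (fun x : ℝ => x + π/2) 1 x := fun x => (hasDerivAt_id x).add_const _
  have hs' : ∀ x : ℝ, HasDerivAt (fun x : ℝ => -(x + π/2)) (-1) x := fun x => ((hasDerivAt_id x).add_const _).neg
  constructor
  · intro x
    exact ((((h1 (x+π/2)).comp x (hs x)).sub ((h1 (-(x+π/2))).comp x (hs' x))).div_const 2).congr_deriv (by ring)
  · intro x
    refine ((((h2 (x+π/2)).comp x (hs x)).add ((h2 (-(x+π/2))).comp x (hs' x))).div_const 2).congr_deriv ?_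
    rw [hev]; ring
  · have := h3 (-(π/2))
    rw [show -(π/2)+π = π/2 by ring] at this
    simp [this]
  · have := h.2.2 (-π)
    have h' := h.2.2 0
    simp at this h'
    simp [h', this]

theorem EvenSol.prop {v : ℝ → ℝ} {V : ℝ} (hV : ∀ x, |v x| ≤ V) {lam : ℝ}
    {z z1 u u1 : ℝ → ℝ} (h : EvenSol v lam z z1) (g : EvenSol v lam u u1) (hu : u 0 ≠ 0) (x : ℝ) :
    z x = (z 0 / u 0) * u x := 
  uniq v V hV lam z z1 u u1 _ 0 h.h1 h.h2 g.h1 g.h2 (by field_simp) (by rw [h.d0, g.d0]; ring) x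

theorem EvenSol.zero {v : ℝ → ℝ} {V : ℝ} (hV : ∀ x, |v x| ≤ V) {lam : ℝ}
    {z z1 : ℝ → ℝ} (h : EvenSol v lam z z1) (hn : ¬ EvenEig v lam) (x : ℝ) : z x = 0 := by
  have h0 : z 0 = 0 := by by_contra h0; exact hn ⟨z, z1, h, h0⟩
  have := uniq v V hV lam z z1 z z1 0 0 h.h1 h.h2 h.h1 h.h2 (by simp [h0]) (by simp [h.d0]) x
  simpa using this

theorem semiMult_eq {v : ℝ → ℝ} (hv : Continuous v) {V : ℝ} (hV : ∀ x, |v x| ≤ V) (hev : ∀ x, v (-x) = v x)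
    (hper : ∀ x, v (x + π) = v x) (lam : ℝ) :
    semiMult v lam = (open Classical in if EvenEig v lam then 1 else 0) +
      (open Classical in if EvenEig (fun x => v (x + π/2)) lam then 1 else 0) := by
  classical
  set w : ℝ → ℝ := fun x => v (x + π/2) with hw
  have hwV : ∀ x, |w x| ≤ V := fun x => hV _
  have hwc : Continuous w := by fun_prop
  have hwev : ∀ x, w (-x) = w x := by
    intro x
    have := hper (-x - π/2)
    rw [show -x - π/2 + π = -x + π/2 by ring] at this
    rw [hw]; beta_reduce; rw [this, ← hev]; congr 1; ring
  have hwper : ∀ x, w (x + π) = w x := by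
    intro x
    rw [hw]; beta_reduce; rw [show x + π + π/2 = x + π/2 + π by ring, hper]
  have hback : ∀ z z1, EvenSol w lam z z1 → IsSemiEF v lam (fun x => z (x + (-(π/2)))) := by
    intro z z1 h
    have := shift_semi (-(π/2)) (h.semi hwc hwV hwev hwper)
    simpa [hw] using this
  have hdec : ∀ f, IsSemiEF v lam f → f = (fun x => (f x + f (-x))/2) + (fun x => (f x - f (-x))/2) := by
    intro f _; funext x; simp; ring
  unfold semiMult
  by_cases hE : EvenEig v lam <;> by_cases hO : EvenEig w lam
  · rw [if_pos hE, if_pos hO]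
    obtain ⟨z, z1, hz, hz0⟩ := hE
    obtain ⟨u, u1, hu, hu0⟩ := hO
    set X : ℝ → ℝ := fun x => u (x + (-(π/2))) with hX
    have hli : LinearIndependent ℝ ![z, X] := by
      rw [LinearIndependent.pair_iff]
      intro s t hst
      have e1 := congrFun hst 0
      have e2 := congrFun hst (π/2)
      simp [hX, hz.e0, hu0] at e1 e2
      rw [hu.even hwV hwev, hu.e0] at e1
      simp [hz0] at e1
      exact ⟨e1, e2⟩
    have : Submodule.span ℝ {f | IsSemiEF v lam f} = Submodule.span ℝ (Set.range ![z, X]) := by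
      apply le_antisymm
      · rw [Submodule.span_le]
        intro f hf
        rw [hdec f hf]
        apply Submodule.add_mem
        · rw [show (fun x => (f x + f (-x))/2) = (((f 0 + f (-0))/2) / z 0) • z from
            funext fun x => (even_part hev hf).prop hV hz hz0 x]
          exact Submodule.smul_mem _ _ (Submodule.subset_span ⟨0, rfl⟩)
        · have := (odd_part hev hper hf).prop hwV hu hu0
          have e : (fun x => (f x - f (-x))/2) = (((f (0+π/2) - f (-(0+π/2)))/2) / u 0) • X := by
            funext x
            have := this (x + (-(π/2)))
            simpa [hX] using this
          rw [e]
          exact Submodule.smul_mem _ _ (Submodule.subset_span ⟨1, rfl⟩)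
      · apply Submodule.span_mono
        rintro _ ⟨i, rfl⟩
        fin_cases i
        · exact hz.semi hv hV hev hper
        · exact hback u u1 hu
    rw [this, finrank_span_eq_card hli]
    simp
  · rw [if_pos hE, if_neg hO]
    obtain ⟨z, z1, hz, hz0⟩ := hE
    have : Submodule.span ℝ {f | IsSemiEF v lam f} = Submodule.span ℝ {z} := by
      apply le_antisymm
      · rw [Submodule.span_le]
        intro f hf
        rw [hdec f hf]
        apply Submodule.add_mem
        · rw [show (fun x => (f x + f (-x))/2) = (((f 0 + f (-0))/2) / z 0) • z from
            funext fun x => (even_part hev hf).prop hV hz hz0 x]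
          exact Submodule.smul_mem _ _ (Submodule.subset_span rfl)
        · have := (odd_part hev hper hf).zero hwV hO
          have e : (fun x => (f x - f (-x))/2) = 0 := by
            funext x
            have := this (x + (-(π/2)))
            simpa using this
          rw [e]
          exact Submodule.zero_mem _
      · apply Submodule.span_mono
        rintro _ rfl
        exact hz.semi hv hV hev hper
    rw [this, finrank_span_singleton]
    rintro rfl; exact hz0 rfl
  · rw [if_neg hE, if_pos hO]
    obtain ⟨u, u1, hu, hu0⟩ := hO
    set X : ℝ → ℝ := fun x => u (x + (-(π/2))) with hX
    have : Submodule.span ℝ {f | IsSemiEF v lam f} = Submodule.span ℝ {X} := by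
      apply le_antisymm
      · rw [Submodule.span_le]
        intro f hf
        rw [hdec f hf]
        apply Submodule.add_mem
        · rw [show (fun x => (f x + f (-x))/2) = 0 from
            funext fun x => (even_part hev hf).zero hV hE x]
          exact Submodule.zero_mem _
        · have := (odd_part hev hper hf).prop hwV hu hu0
          have e : (fun x => (f x - f (-x))/2) = (((f (0+π/2) - f (-(0+π/2)))/2) / u 0) • X := by
            funext x
            have := this (x + (-(π/2)))
            simpa [hX] using this
          rw [e]
          exact Submodule.smul_mem _ _ (Submodule.subset_span rfl)
      · apply Submodule.span_mono
        rintro _ rfl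
        exact hback u u1 hu
    rw [this, finrank_span_singleton]
    intro h
    have := congrFun h (π/2)
    simp [hX, hu0] at this
  · rw [if_neg hE, if_neg hO]
    have : Submodule.span ℝ {f | IsSemiEF v lam f} = ⊥ := by
      rw [eq_bot_iff, Submodule.span_le]
      intro f hf
      rw [hdec f hf, show (fun x => (f x + f (-x))/2) = 0 from
            funext fun x => (even_part hev hf).zero hV hE x]
      have := (odd_part hev hper hf).zero hwV hO
      have e : (fun x => (f x - f (-x))/2) = 0 := by
        funext x
        have := this (x + (-(π/2)))
        simpa using this
      rw [e]; simp
    rw [this]; simp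
end WH

namespace WH

structure SpecData (v : ℝ → ℝ) (e : ℕ → ℝ) (y y1 : ℕ → ℝ → ℝ) (C : ℝ) : Prop where
  smono : StrictMono e
  sol : ∀ k, EvenSol v (e k) (y k) (y1 k)
  y0 : ∀ k, y k 0 = 1
  hC : 0 ≤ C
  eb : ∀ k : ℕ, |e k - (2*(k:ℝ)+1)^2| ≤ C
  yb : ∀ (k : ℕ) x, 0 ≤ x → x ≤ π/2 → |y k x - cos ((2*(k:ℝ)+1)*x)| ≤ C/(2*k+1)
  rng : ∀ lam, EvenEig v lam ↔ lam ∈ Set.range e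

theorem specData_exists (v : ℝ → ℝ) (hv : Continuous v) (V : ℝ) (hV : ∀ x, |v x| ≤ V) :
    ∃ e y y1 C, SpecData v e y y1 C := by
  have hV0 : 0 ≤ V := le_trans (abs_nonneg _) (hV 0)
  obtain ⟨ω, y, y1, C, hmono, hpos, hb, h1, h2, y0, d0, e0, hc, hr⟩ :=
    sturm (fun x => v x + (V+1)) (2*V+1) (by fun_prop) (fun x => by linarith [(abs_le.1 (hV x)).1])
      (fun x => by linarith [(abs_le.1 (hV x)).2])
  set A := V + 1 with hA
  set M := 2*V+1 with hM
  have hsol : ∀ k, EvenSol v (ω k^2 - A) (y k) (y1 k) := fun k =>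
    ⟨h1 k, fun x => (h2 k x).congr_deriv (by ring), d0 k, e0 k⟩
  have hC0 : 0 ≤ C := by
    have := (abs_nonneg _).trans (hc 0 0 le_rfl (by positivity))
    simpa using this
  refine ⟨fun k => ω k^2 - A, y, y1, C + (M*(M+2) + A), ?_, hsol, y0, by positivity, ?_, ?_, ?_⟩
  · intro i j hij
    have := hmono hij
    have := hpos i
    simp only
    nlinarith
  · intro k
    obtain ⟨a1, a2⟩ := hb k
    have hk : (0:ℝ) ≤ k := Nat.cast_nonneg k
    have hN : (1:ℝ) ≤ 2*k+1 := by linarith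
    have hM0 : 0 ≤ M := by positivity
    set N : ℝ := 2*k+1 with hNdef
    set d := ω k - N with hd
    have hd0 : 0 ≤ d := by linarith
    have hd1 : d ≤ M/N := by linarith
    have hd2 : d * N ≤ M := by rwa [le_div_iff₀ (by linarith)] at hd1
    have hd3 : d ≤ M := by nlinarith
    have hω : ω k = N + d := by rw [hd]; ring
    rw [hω, abs_le]
    constructor
    · nlinarith [mul_nonneg hd0 hd0, mul_nonneg hM0 hM0]
    · have : d*d ≤ M*M := mul_le_mul hd3 hd3 hd0 hM0
      nlinarith
  · intro k x hx hx'
    refine (hc k x hx hx').trans ?_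
    gcongr
    have : 0 ≤ M*(M+2)+A := by positivity
    linarith
  · intro lam
    constructor
    · rintro ⟨z, z1, hz, hz0⟩
      obtain ⟨k, hk⟩ := hr (lam + A) z z1 hz.h1 (fun x => (hz.h2 x).congr_deriv (by ring)) hz.d0 hz.e0 hz0
      exact ⟨k, by simp only; linarith⟩
    · rintro ⟨k, rfl⟩
      exact ⟨y k, y1 k, hsol k, by rw [y0]; norm_num⟩

def pot (α t x : ℝ) : ℝ := -(4*α*t) * cos (2*x) - 2*α^2 * cos (4*x)

theorem pot_cont (α t : ℝ) : Continuous (pot α t) := by unfold pot; fun_prop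
theorem pot_bd (α t x : ℝ) : |pot α t x| ≤ |4*α*t| + 2*α^2 := by
  unfold pot
  have h1 := abs_cos_le_one (2*x)
  have h2 := abs_cos_le_one (4*x)
  calc _ ≤ |-(4*α*t) * cos (2*x)| + |2*α^2 * cos (4*x)| := abs_sub _ _
    _ = |4*α*t| * |cos (2*x)| + 2*α^2 * |cos (4*x)| := by
      rw [abs_mul, abs_neg, abs_mul (2*α^2), abs_of_nonneg (show 0 ≤ 2*α^2 by positivity)]
    _ ≤ |4*α*t| * 1 + 2*α^2 * 1 := by gcongr
    _ = _ := by ring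
theorem pot_even (α t x : ℝ) : pot α t (-x) = pot α t x := by
  unfold pot; rw [mul_neg, mul_neg, cos_neg, cos_neg]
theorem pot_per (α t x : ℝ) : pot α t (x+π) = pot α t x := by
  unfold pot
  rw [show 2*(x+π) = 2*x + 2*π by ring, show 4*(x+π) = 4*x+2*π+2*π by ring, cos_add_two_pi, cos_add_two_pi, cos_add_two_pi]
theorem pot_shift (α t : ℝ) : (fun x => pot α t (x+π/2)) = pot α (-t) := by
  funext x
  unfold pot
  rw [show 2*(x+π/2) = 2*x + π by ring, show 4*(x+π/2) = 4*x+2*π by ring, cos_add_two_pi, cos_add_pi]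
  ring

theorem gap_eq (α t : ℝ) (lamM : ℕ → ℝ) (hM : EnumSemi (pot α t) lamM) (e o : ℕ → ℝ)
    (y y1 z z1 : ℕ → ℝ → ℝ) (C : ℝ) (D : ℝ) (hE : SpecData (pot α t) e y y1 C)
    (hO : SpecData (pot α (-t)) o z z1 D) :
    ∃ K0 : ℕ, ∀ K, K0 ≤ K → lamM (2*K+2) - lamM (2*K+1) = |e K - o K| := by
  classical
  obtain ⟨hm, hex, hcard⟩ := hM
  have hmult := semiMult_eq (pot_cont α t) (pot_bd α t) (pot_even α t) (pot_per α t)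
  rw [pot_shift] at hmult
  simp only [hE.rng, hO.rng] at hmult
  refine enum_gap e o lamM hE.smono hO.smono hm ?_ _ hmult hcard (max C D)
    (fun k => (hE.eb k).trans (le_max_left _ _)) (fun k => (hO.eb k).trans (le_max_right _ _))
  intro n hn
  obtain ⟨f, hf, hsf⟩ := hex n hn
  by_contra hcon
  push Not at hcon
  have h0 : semiMult (pot α t) (lamM n) = 0 := by
    rw [hmult, if_neg hcon.1, if_neg hcon.2]
  have h1 : EvenSol _ _ _ _ := even_part (pot_even α t) hsf
  have h2 : EvenSol _ _ _ _ := odd_part (pot_even α t) (pot_per α t) hsf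
  rw [pot_shift] at h2
  have a1 := h1.zero (pot_bd α t) (by rw [hE.rng]; exact hcon.1)
  have a2 := h2.zero (pot_bd α (-t)) (by rw [hO.rng]; exact hcon.2)
  apply hf
  funext x
  have b1 := a1 x
  have b2 := a2 (x - π/2)
  simp at b1 b2
  simp; linarith
end WH

namespace WH

def ee (α x : ℝ) : ℝ := exp (-α * cos (2*x))

theorem ee_cont (α : ℝ) : Continuous (ee α) := by unfold ee; fun_prop
theorem ee_pos (α x : ℝ) : 0 < ee α x := exp_pos _
theorem ee_even (α x : ℝ) : ee α (-x) = ee α x := by unfold ee; rw [mul_neg, cos_neg]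
theorem ee_le (α x : ℝ) : ee α x ≤ exp |α| := by
  unfold ee
  apply exp_le_exp.2
  calc -α * cos (2*x) ≤ |-α * cos (2*x)| := le_abs_self _
    _ = |α| * |cos (2*x)| := by rw [abs_mul, abs_neg]
    _ ≤ |α| * 1 := by gcongr; exact abs_cos_le_one _
    _ = _ := by ring
theorem ee_deriv (α x : ℝ) : HasDerivAt (ee α) (2*α*sin (2*x) * ee α x) x := by
  unfold ee
  have h : HasDerivAt (fun x : ℝ => 2*x) 2 x := by simpa using (hasDerivAt_id x).const_mul 2
  exact ((h.cos.const_mul (-α)).exp).congr_deriv (by ring)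
theorem ee_mul (α x : ℝ) : ee α x * ee (-α) x = 1 := by
  unfold ee; rw [← exp_add]; simp

def ii (α : ℝ) (j : ℤ) : ℝ := (2/π) * ∫ x in (0:ℝ)..(π/2), ee α x * cos (2*j*x)

theorem ii_neg (α : ℝ) (j : ℤ) : ii α (-j) = ii α j := by
  unfold ii; congr 2; ext x; congr 1; rw [← cos_neg]; congr 1; push_cast; ring

theorem ii_flip (α : ℝ) (j : ℤ) : ii (-α) j = (-1)^j * ii α j := by
  unfold ii
  have h := intervalIntegral.integral_comp_sub_left (a := (0:ℝ)) (b := π/2) (fun x => ee (-α) x * cos (2*j*x)) (π/2)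
  simp only [sub_self, sub_zero] at h
  rw [← h, mul_left_comm, ← intervalIntegral.integral_const_mul ((-1)^j : ℝ)]
  congr 1
  apply intervalIntegral.integral_congr
  intro x _
  beta_reduce
  have e1 : ee (-α) (π/2 - x) = ee α x := by
    unfold ee; rw [show 2*(π/2-x) = π - 2*x by ring, cos_pi_sub]; congr 1; ring
  have e2 : cos (2*j*(π/2-x)) = (-1)^j * cos (2*j*x) := by
    rw [show 2*j*(π/2-x) = j*π - 2*j*x by ring, cos_sub, cos_int_mul_pi, sin_int_mul_pi]; ring
  rw [e1, e2]; ring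

theorem ii_le (α : ℝ) (j : ℤ) : |ii α j| ≤ exp |α| := by
  unfold ii
  have h := intervalIntegral.norm_integral_le_of_norm_le_const (a := (0:ℝ)) (b := π/2) (C := exp |α|)
    (f := fun x => ee α x * cos (2*j*x)) (by
      intro x _
      rw [norm_eq_abs, abs_mul, abs_of_pos (ee_pos α x)]
      calc _ ≤ exp |α| * 1 := mul_le_mul (ee_le α x) (abs_cos_le_one _) (abs_nonneg _) (exp_pos _).le
        _ = _ := by ring)
  rw [norm_eq_abs, sub_zero, abs_of_pos (show 0 < π/2 by positivity)] at h
  rw [abs_mul, abs_of_pos (show 0 < 2/π by positivity)]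
  calc 2/π * _ ≤ 2/π * (exp |α| * (π/2)) := by gcongr
    _ = _ := by field_simp

theorem ii_rec (α : ℝ) (j : ℤ) : j * ii α j = -(α/2) * (ii α (j-1) - ii α (j+1)) := by
  have hd : ∀ x, HasDerivAt (fun x => ee α x * sin (2*j*x))
      (2*j*(ee α x * cos (2*j*x)) + α * (ee α x * cos (2*(j-1:ℤ)*x)) - α * (ee α x * cos (2*(j+1:ℤ)*x))) x := by
    intro x
    have h : HasDerivAt (fun x : ℝ => 2*(j:ℝ)*x) (2*j) x := by simpa using (hasDerivAt_id x).const_mul (2*(j:ℝ))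
    refine ((ee_deriv α x).mul h.sin).congr_deriv ?_
    push_cast
    rw [show 2*((j:ℝ)-1)*x = 2*j*x - 2*x by ring, show 2*((j:ℝ)+1)*x = 2*j*x + 2*x by ring, cos_sub, cos_add]
    ring
  have c := ee_cont α
  have hi := intervalIntegral.integral_eq_sub_of_hasDerivAt (a := (0:ℝ)) (b := π/2) (fun x _ => hd x)
    (by apply Continuous.intervalIntegrable; fun_prop)
  rw [show 2*(j:ℝ)*(π/2) = j*π by ring, sin_int_mul_pi] at hi
  rw [intervalIntegral.integral_sub, intervalIntegral.integral_add, intervalIntegral.integral_const_mul, intervalIntegral.integral_const_mul, intervalIntegral.integral_const_mul] at hi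
  · simp only [mul_zero, sin_zero, sub_self] at hi
    unfold ii
    linear_combination (1/π) * hi
  all_goals apply Continuous.intervalIntegrable; fun_prop

theorem ii_decay (α : ℝ) : ∃ B, 0 < B ∧ ∀ j : ℤ, |ii α j| ≤ B / (1 + (j:ℝ)^2) := by
  set M := exp |α| with hM
  have hMp : 0 < M := exp_pos _
  have h1 : ∀ j : ℤ, |(j:ℝ)| * |ii α j| ≤ |α| * M := by
    intro j
    rw [← abs_mul, ii_rec, abs_mul, abs_neg, abs_div, abs_two]
    have := abs_sub (ii α (j-1)) (ii α (j+1))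
    have a1 := ii_le α (j-1)
    have a2 := ii_le α (j+1)
    calc |α|/2 * |ii α (j-1) - ii α (j+1)| ≤ |α|/2 * (M + M) := by gcongr; linarith
      _ = _ := by ring
  have h2 : ∀ j : ℤ, 2 ≤ |(j:ℝ)| → (j:ℝ)^2 * |ii α j| ≤ 2*|α|^2*M := by
    intro j hj
    have b1 := h1 (j-1)
    have b2 := h1 (j+1)
    push_cast at b1 b2
    have c1 : |(j:ℝ)|/2 ≤ |(j:ℝ)-1| := by
      have := abs_sub_abs_le_abs_sub (j:ℝ) 1
      rw [abs_one] at this; linarith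
    have c2 : |(j:ℝ)|/2 ≤ |(j:ℝ)+1| := by
      have := abs_sub_abs_le_abs_sub (j:ℝ) (-1)
      rw [abs_neg, abs_one, sub_neg_eq_add] at this; linarith
    have d1 : |(j:ℝ)|/2 * |ii α (j-1)| ≤ |α| * M := le_trans (by gcongr) b1
    have d2 : |(j:ℝ)|/2 * |ii α (j+1)| ≤ |α| * M := le_trans (by gcongr) b2
    have e : |(j:ℝ)| * |ii α j| = |α|/2 * |ii α (j-1) - ii α (j+1)| := by
      rw [← abs_mul, ii_rec, abs_mul, abs_neg, abs_div, abs_two]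
    have := abs_sub (ii α (j-1)) (ii α (j+1))
    calc (j:ℝ)^2 * |ii α j| = |(j:ℝ)| * (|(j:ℝ)| * |ii α j|) := by rw [← sq_abs]; ring
      _ = |α| * ((|(j:ℝ)|/2) * |ii α (j-1) - ii α (j+1)|) := by rw [e]; ring
      _ ≤ |α| * ((|(j:ℝ)|/2) * (|ii α (j-1)| + |ii α (j+1)|)) := by gcongr
      _ ≤ |α| * (|α| * M + |α| * M) := by gcongr; linarith
      _ = _ := by ring
  refine ⟨5*M + 2*|α|^2*M, by positivity, fun j => ?_⟩
  rw [le_div_iff₀ (by positivity)]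
  have a := ii_le α j
  have a0 := abs_nonneg (ii α j)
  by_cases hj : 2 ≤ |(j:ℝ)|
  · have := h2 j hj
    nlinarith
  · push Not at hj
    have : (j:ℝ)^2 ≤ 4 := by rw [← sq_abs]; nlinarith [abs_nonneg (j:ℝ)]
    have : 0 ≤ 2*|α|^2*M := by positivity
    nlinarith

theorem half_int (F : ℝ → ℂ) (hF : Continuous F) : ∫ x in (-(π/2))..(π/2), F x = ∫ x in (0:ℝ)..(π/2), (F (-x) + F x) := by
  rw [← intervalIntegral.integral_add_adjacent_intervals (b := 0) (hF.intervalIntegrable _ _) (hF.intervalIntegrable _ _)]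
  rw [intervalIntegral.integral_add (by apply Continuous.intervalIntegrable; fun_prop) (hF.intervalIntegrable _ _)]
  congr 1
  have := intervalIntegral.integral_comp_neg (a := 0) (b := π/2) F
  rw [this]; simp

theorem coeff_even (F : ℝ → ℝ) (hF : Continuous F) (hev : ∀ x, F (-x) = F x) (h : -(π/2) < π/2) (n : ℤ) :
    fourierCoeffOn h (fun x => (F x : ℂ)) n = (((2/π) * ∫ x in (0:ℝ)..(π/2), F x * cos (2*n*x) : ℝ) : ℂ) := by
  rw [fourierCoeffOn_eq_integral]
  have hT : π/2 - -(π/2) = π := by ring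
  have e : ∀ x : ℝ, (fourier (-n) : C(AddCircle (π/2 - -(π/2)), ℂ)) (x : AddCircle (π/2 - -(π/2))) = Complex.exp (-(2*n*x:ℝ) * Complex.I) := by
    intro x
    rw [fourier_coe_apply, hT]
    congr 1
    have : (π:ℂ) ≠ 0 := by exact_mod_cast pi_ne_zero
    push_cast
    field_simp
  simp only [e, smul_eq_mul]
  rw [half_int _ (by fun_prop)]
  have e2 : ∀ x : ℝ, Complex.exp (-(2*n*(-x):ℝ) * Complex.I) * (F (-x):ℂ) + Complex.exp (-(2*n*x:ℝ) * Complex.I) * (F x:ℂ)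
      = ((2 * (F x * cos (2*n*x)) : ℝ) : ℂ) := by
    intro x
    rw [hev]
    push_cast
    rw [Complex.cos]
    ring_nf
  simp only [e2]
  rw [intervalIntegral.integral_ofReal, hT, intervalIntegral.integral_const_mul]
  rw [Complex.real_smul]
  push_cast
  ring

theorem parseval_even (F : ℝ → ℝ) (hF : Continuous F) (hev : ∀ x, F (-x) = F x) :
    HasSum (fun n : ℤ => ((2/π) * ∫ x in (0:ℝ)..(π/2), F x * cos (2*n*x))^2) ((2/π) * ∫ x in (0:ℝ)..(π/2), F x^2) := by
  have h : -(π/2) < π/2 := by have := pi_pos; linarith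
  have hL : MeasureTheory.MemLp (fun x => (F x : ℂ)) 2 (MeasureTheory.volume.restrict (Set.Ioc (-(π/2)) (π/2))) := by
    have hc : ContinuousOn (fun x => (F x : ℂ)) (Set.Icc (-(π/2)) (π/2)) := by fun_prop
    obtain ⟨B, hB⟩ := isCompact_Icc.exists_bound_of_continuousOn hc
    refine MeasureTheory.MemLp.of_bound (by fun_prop) B ?_
    filter_upwards [MeasureTheory.ae_restrict_mem measurableSet_Ioc] with x hx
    exact hB x (Set.Ioc_subset_Icc_self hx)
  have := hasSum_sq_fourierCoeffOn h hL
  simp only [coeff_even F hF hev h] at this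
  simp only [Complex.norm_real, norm_eq_abs, sq_abs] at this
  convert! this using 1
  have e := half_int (fun x => ((F x^2 : ℝ):ℂ)) (by fun_prop)
  simp only [hev] at e
  have e2 : ∀ x, ((F x^2 : ℝ):ℂ) + ((F x^2:ℝ):ℂ) = ((2 * F x^2 : ℝ):ℂ) := by intro x; push_cast; ring
  simp only [e2] at e
  rw [intervalIntegral.integral_ofReal, intervalIntegral.integral_ofReal] at e
  rw [Complex.ofReal_inj.1 e, intervalIntegral.integral_const_mul, smul_eq_mul]
  rw [show π/2 - -(π/2) = π by ring]
  ring

theorem ii_parseval (α : ℝ) : HasSum (fun j : ℤ => (-1)^j * ii α j^2) 1 := by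
  have c1 := ee_cont α
  have c2 := ee_cont (-α)
  have h1 := parseval_even (fun x => ee α x + ee (-α) x) (by fun_prop) (fun x => by simp [ee_even])
  have h2 := parseval_even (fun x => ee α x - ee (-α) x) (by fun_prop) (fun x => by simp [ee_even])
  have h := (h1.sub h2).div_const 4
  convert! h using 1
  · funext j
    have e1 : (2/π) * ∫ x in (0:ℝ)..(π/2), (ee α x + ee (-α) x) * cos (2*j*x) = ii α j + ii (-α) j := by
      unfold ii
      rw [← mul_add, ← intervalIntegral.integral_add]
      · congr 2; ext x; ring
      all_goals apply Continuous.intervalIntegrable; fun_prop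
    have e2 : (2/π) * ∫ x in (0:ℝ)..(π/2), (ee α x - ee (-α) x) * cos (2*j*x) = ii α j - ii (-α) j := by
      unfold ii
      rw [← mul_sub, ← intervalIntegral.integral_sub]
      · congr 2; ext x; ring
      all_goals apply Continuous.intervalIntegrable; fun_prop
    rw [e1, e2, ii_flip]; ring
  · rw [← mul_sub, ← intervalIntegral.integral_sub]
    · have : ∀ x, (ee α x + ee (-α) x)^2 - (ee α x - ee (-α) x)^2 = 4 := by
        intro x; linear_combination 4 * ee_mul α x
      simp only [this]
      simp
      field_simp
    all_goals apply Continuous.intervalIntegrable; fun_prop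

theorem ii_zero_pos (α : ℝ) : 0 < ii α 0 := by
  unfold ii
  have : 0 < ∫ x in (0:ℝ)..(π/2), ee α x * cos (2*(0:ℤ)*x) := by
    apply intervalIntegral.intervalIntegral_pos_of_pos
    · have := ee_cont α
      apply Continuous.intervalIntegrable; fun_prop
    · intro x; simp [ee_pos]
    · positivity
  positivity
end WH

namespace WH

def vt (β : ℝ) (j i : ℕ) : ℝ := β^i * (j.factorial : ℝ) / (i.factorial * (i+j).factorial)
def vv (β : ℝ) (j : ℕ) : ℝ := ∑' i, vt β j i

theorem vt_nonneg {β : ℝ} (hβ : 0 ≤ β) (j i : ℕ) : 0 ≤ vt β j i := by unfold vt; positivity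

theorem vt_le {β : ℝ} (hβ : 0 ≤ β) (j i : ℕ) : vt β j i ≤ β^i / i.factorial := by
  unfold vt
  rw [div_le_div_iff₀ (by positivity) (by positivity)]
  have : (j.factorial : ℝ) ≤ (i+j).factorial := by exact_mod_cast Nat.factorial_le (by omega)
  calc β^i * j.factorial * i.factorial ≤ β^i * (i+j).factorial * i.factorial := by gcongr
    _ = _ := by ring

theorem vt_sum {β : ℝ} (hβ : 0 ≤ β) (j : ℕ) : Summable (vt β j) :=
  Summable.of_nonneg_of_le (vt_nonneg hβ j) (vt_le hβ j) (Real.summable_pow_div_factorial β)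

theorem vv_rec {β : ℝ} (hβ : 0 ≤ β) (j : ℕ) :
    vv β j = vv β (j+1) + β/((j+1)*(j+2)) * vv β (j+2) := by
  unfold vv
  rw [(vt_sum hβ j).tsum_eq_zero_add, (vt_sum hβ (j+1)).tsum_eq_zero_add, ← tsum_mul_left]
  have s1 := (summable_nat_add_iff 1).2 (vt_sum hβ (j+1))
  have s2 := (vt_sum hβ (j+2)).mul_left (β/((j+1)*(j+2)))
  rw [add_assoc, ← s1.tsum_add s2]
  congr 1
  · simp [vt]
    field_simp
  · apply tsum_congr
    intro i
    simp only [vt]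
    rw [show i + 1 + j = (i+j)+1 by ring, show i+1+(j+1) = (i+j)+2 by ring, show i + (j+2) = (i+j)+2 by ring]
    simp only [Nat.factorial_succ]
    push_cast
    field_simp
    ring

theorem vv_bounds {β : ℝ} (hβ : 0 ≤ β) (j : ℕ) : 1 ≤ vv β j ∧ vv β j ≤ 1 + exp β / (j+1) := by
  have h0 : vt β j 0 = 1 := by simp [vt, (Nat.factorial_pos j).ne']
  have hs := vt_sum hβ j
  have hs1 := (summable_nat_add_iff 1).2 hs
  have he : vv β j = 1 + ∑' i, vt β j (i+1) := by unfold vv; rw [hs.tsum_eq_zero_add, h0]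
  rw [he]
  constructor
  · have : 0 ≤ ∑' i, vt β j (i+1) := tsum_nonneg (fun i => vt_nonneg hβ j _)
    linarith
  · have hb : ∀ i, vt β j (i+1) ≤ (β^(i+1)/(i+1).factorial) / (j+1) := by
      intro i
      unfold vt
      rw [div_div, div_le_div_iff₀ (by positivity) (by positivity)]
      have : (j.factorial : ℝ) * (j+1) ≤ (i+1+j).factorial := by
        have : (j+1).factorial ≤ (i+1+j).factorial := Nat.factorial_le (by omega)
        rw [Nat.factorial_succ] at this
        have h2 : (((j+1)*j.factorial : ℕ):ℝ) ≤ (i+1+j).factorial := by exact_mod_cast this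
        push_cast at h2; linarith
      calc β^(i+1) * j.factorial * ((i+1).factorial * (j+1)) = β^(i+1) * (i+1).factorial * (j.factorial * (j+1)) := by ring
        _ ≤ β^(i+1) * (i+1).factorial * (i+1+j).factorial := by gcongr
        _ = _ := by ring
    have hse := Real.summable_pow_div_factorial β
    have hse1 := (summable_nat_add_iff 1).2 hse
    have h1 := hs1.tsum_le_tsum hb (hse1.div_const _)
    rw [tsum_div_const] at h1
    have h2 : exp β = 1 + ∑' i : ℕ, β^(i+1)/(i+1).factorial := by
      rw [Real.exp_eq_exp_ℝ, NormedSpace.exp_eq_tsum_div]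
      beta_reduce; rw [hse.tsum_eq_zero_add]; simp
    have h3 : (∑' i : ℕ, β^(i+1)/(i+1).factorial) / ((j:ℝ)+1) ≤ exp β / (j+1) := by
      gcongr; linarith
    linarith

theorem int_cos_pow (n : ℕ) : (∫ x in (0:ℝ)..π, cos x ^ (2*n) = π * (2*n).factorial / (4^n * n.factorial^2)) ∧
    (∫ x in (0:ℝ)..π, cos x ^ (2*n+1) = 0) := by
  induction n with
  | zero => simp
  | succ n ih =>
    constructor
    · rw [show 2*(n+1) = 2*n+2 by ring, integral_cos_pow, ih.1]
      simp only [Nat.factorial_succ, sin_pi, sin_zero]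
      push_cast
      field_simp
      ring
    · rw [show 2*(n+1)+1 = (2*n+1)+2 by ring, integral_cos_pow, ih.2]
      simp

theorem ii_zero_eq (α : ℝ) : ii α 0 = vv (α^2/4) 0 := by
  have hsub : ∫ x in (0:ℝ)..(π/2), ee α x * cos (2*(0:ℤ)*x) = (1/2) * ∫ x in (0:ℝ)..π, exp (-α * cos x) := by
    have := intervalIntegral.integral_comp_mul_left (a := 0) (b := π/2) (fun x => exp (-α * cos x)) (c := 2) (by norm_num)
    rw [show 2*(π/2) = π by ring, mul_zero] at this
    simp only [ee, Int.cast_zero, mul_zero, zero_mul, cos_zero, mul_one]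
    rw [this]; simp
  have hsum := intervalIntegral.hasSum_integral_of_dominated_convergence (a := 0) (b := π) (μ := MeasureTheory.volume)
    (F := fun (n : ℕ) x => (-α * cos x)^n / n.factorial) (f := fun x => exp (-α * cos x))
    (fun n _ => |α|^n / n.factorial) (fun n => by fun_prop)
    (fun n => Filter.Eventually.of_forall fun x _ => by
      rw [norm_div, norm_pow, norm_eq_abs, abs_mul, abs_neg, RCLike.norm_natCast]
      gcongr
      calc |α| * |cos x| ≤ |α| * 1 := by gcongr; exact abs_cos_le_one _
        _ = _ := by ring)
    (Filter.Eventually.of_forall fun x _ => Real.summable_pow_div_factorial _)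
    (by simp)
    (Filter.Eventually.of_forall fun x _ => by
      rw [Real.exp_eq_exp_ℝ]; exact NormedSpace.expSeries_div_hasSum_exp (-α * cos x))
  have hterm : ∀ n : ℕ, ∫ x in (0:ℝ)..π, (-α * cos x)^n / n.factorial = ((-α)^n / n.factorial) * ∫ x in (0:ℝ)..π, cos x ^ n := by
    intro n
    rw [← intervalIntegral.integral_const_mul]
    apply intervalIntegral.integral_congr
    intro x _
    simp only [mul_pow]; ring
  simp only [hterm] at hsum
  have hodd : ∀ n ∉ Set.range (fun i : ℕ => 2*i), ((-α)^n / n.factorial) * ∫ x in (0:ℝ)..π, cos x ^ n = 0 := by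
    intro n hn
    have : ∃ k, n = 2*k+1 := by
      rcases Nat.even_or_odd' n with ⟨k, h | h⟩
      · exact absurd ⟨k, h.symm⟩ hn
      · exact ⟨k, h⟩
    obtain ⟨k, rfl⟩ := this
    rw [(int_cos_pow k).2, mul_zero]
  have hinj : Function.Injective (fun i : ℕ => 2*i) := fun a b h => by simpa using h
  rw [← hinj.hasSum_iff hodd] at hsum
  have h2 : HasSum (vt (α^2/4) 0) ((1/π) * ∫ x in (0:ℝ)..π, exp (-α * cos x)) := by
    convert! hsum.mul_left (1/π) using 1
    funext n
    simp only [Function.comp, (int_cos_pow n).1, vt]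
    rw [pow_mul, neg_sq, div_pow]
    simp
    field_simp
  unfold vv ii
  rw [h2.tsum_eq, hsub]; ring
end WH

namespace WH

def GG (α : ℝ) (y : ℝ → ℝ) (n : ℤ) : ℝ := (4/π) * ∫ x in (0:ℝ)..(π/2), ee α x * y x * cos ((2*n+1)*x)

theorem cos_half (n : ℤ) : cos ((2*n+1)*(π/2)) = 0 := by
  rw [show (2*(n:ℝ)+1)*(π/2) = n*π + π/2 by ring, cos_add_pi_div_two, sin_int_mul_pi, neg_zero]

theorem GG_rec {α t lam : ℝ} {y y1 : ℝ → ℝ} (h : EvenSol (pot α t) lam y y1) (n : ℤ) :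
    (lam + 2*α^2 - (2*n+1)^2) * GG α y n + 2*α*(t - 2*n) * GG α y (n-1) + 2*α*(2*n+2+t) * GG α y (n+1) = 0 := by
  have cy : Continuous y := continuous_iff_continuousAt.2 fun x => (h.h1 x).continuousAt
  have cy1 : Continuous y1 := continuous_iff_continuousAt.2 fun x => (h.h2 x).continuousAt
  have ce := ee_cont α
  have hd : ∀ x, HasDerivAt (fun x => y x * (ee α x * (2*α*sin (2*x) * cos ((2*n+1)*x) - (2*n+1) * sin ((2*n+1)*x)))
      - y1 x * (ee α x * cos ((2*n+1)*x)))
      ((lam + 2*α^2 - (2*n+1)^2) * (ee α x * y x * cos ((2*n+1)*x)) + 2*α*(t - 2*n) * (ee α x * y x * cos ((2*(n-1:ℤ)+1)*x))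
        + 2*α*(2*n+2+t) * (ee α x * y x * cos ((2*(n+1:ℤ)+1)*x))) x := by
    intro x
    have hm : ∀ c : ℝ, HasDerivAt (fun x : ℝ => c*x) c x := fun c => by simpa using (hasDerivAt_id x).const_mul c
    have d1 := ((hm 2).sin.const_mul (2*α)).mul (hm (2*n+1)).cos
    have d2 := ((hm (2*n+1)).sin.const_mul (2*(n:ℝ)+1))
    have d3 := (h.h1 x).mul ((ee_deriv α x).mul (d1.sub d2))
    have d4 := (h.h2 x).mul ((ee_deriv α x).mul (hm (2*n+1)).cos)
    refine (d3.sub d4).congr_deriv ?_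
    unfold pot
    simp only [Pi.sub_apply, Pi.mul_apply]
    push_cast
    rw [show (2*((n:ℝ)-1)+1)*x = (2*n+1)*x - 2*x by ring, show (2*((n:ℝ)+1)+1)*x = (2*n+1)*x + 2*x by ring, cos_sub, cos_add,
      show 4*x = 2*(2*x) by ring, cos_two_mul (2*x)]
    linear_combination (4*α^2*ee α x * y x * cos ((2*n+1)*x)) * sin_sq_add_cos_sq (2*x)
  have hi := intervalIntegral.integral_eq_sub_of_hasDerivAt (a := (0:ℝ)) (b := π/2) (fun x _ => hd x)
    (by apply Continuous.intervalIntegrable; fun_prop)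
  rw [h.d0, h.e0, cos_half n] at hi
  simp only [mul_zero, sin_zero, zero_mul, sub_self] at hi
  rw [intervalIntegral.integral_add, intervalIntegral.integral_add, intervalIntegral.integral_const_mul, intervalIntegral.integral_const_mul, intervalIntegral.integral_const_mul] at hi
  · unfold GG
    linear_combination (4/π) * hi
  all_goals apply Continuous.intervalIntegrable; fun_prop

theorem GG_neg (α : ℝ) (y : ℝ → ℝ) : GG α y (-1) = GG α y 0 := by
  unfold GG; congr 2; ext x; congr 1; rw [← cos_neg]; congr 1; push_cast; ring

theorem int_cos (m : ℤ) (hm : m ≠ 0) : ∫ x in (0:ℝ)..(π/2), cos (2*m*x) = 0 := by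
  have hm' : (m:ℝ) ≠ 0 := by exact_mod_cast hm
  have h : (2*(m:ℝ)) ≠ 0 := by positivity
  have := intervalIntegral.integral_comp_mul_left (a := 0) (b := π/2) cos h
  rw [this, integral_cos, show 2*(m:ℝ)*(π/2) = m*π by ring, sin_int_mul_pi]; simp

theorem int_cos_cos (k l : ℕ) : ∫ x in (0:ℝ)..(π/2), cos ((2*k+1)*x) * cos ((2*l+1)*x) = if k = l then π/4 else 0 := by
  have e : ∀ x : ℝ, cos ((2*k+1)*x) * cos ((2*l+1)*x) = (1/2) * (cos (2*((k:ℤ)-l:ℤ)*x) + cos (2*((k:ℤ)+l+1:ℤ)*x)) := by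
    intro x
    push_cast
    rw [show 2*((k:ℝ)-l)*x = (2*k+1)*x - (2*l+1)*x by ring, show 2*((k:ℝ)+l+1)*x = (2*k+1)*x + (2*l+1)*x by ring, cos_sub, cos_add]
    ring
  simp only [e]
  rw [intervalIntegral.integral_const_mul, intervalIntegral.integral_add, int_cos _ (by omega : (k:ℤ)+l+1 ≠ 0)]
  · by_cases hkl : k = l
    · subst hkl; simp; ring
    · rw [if_neg hkl, int_cos _ (by omega)]; simp
  all_goals apply Continuous.intervalIntegrable; fun_prop

theorem bessel (h : ℝ → ℝ) (hh : Continuous h) (n : ℕ) :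
    ∑ k ∈ Finset.range n, ((4/π) * ∫ x in (0:ℝ)..(π/2), h x * cos ((2*k+1)*x))^2 ≤ (4/π) * ∫ x in (0:ℝ)..(π/2), h x^2 := by
  set c : ℕ → ℝ := fun k => (4/π) * ∫ x in (0:ℝ)..(π/2), h x * cos ((2*k+1)*x) with hc
  have key : ∀ n : ℕ, (∀ m : ℕ, n ≤ m → ∫ x in (0:ℝ)..(π/2), (h x - ∑ k ∈ Finset.range n, c k * cos ((2*k+1)*x)) * cos ((2*m+1)*x) = π/4 * c m) ∧
      ∫ x in (0:ℝ)..(π/2), (h x - ∑ k ∈ Finset.range n, c k * cos ((2*k+1)*x))^2 = (∫ x in (0:ℝ)..(π/2), h x^2) - π/4 * ∑ k ∈ Finset.range n, c k^2 := by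
    intro n
    induction n with
    | zero =>
      refine ⟨fun m _ => ?_, by simp⟩
      simp [hc]; field_simp
    | succ n ih =>
      obtain ⟨i1, i2⟩ := ih
      set R : ℝ → ℝ := fun x => h x - ∑ k ∈ Finset.range n, c k * cos ((2*k+1)*x) with hR
      have cR : Continuous R := by rw [hR]; fun_prop
      have hR1 : ∀ x, h x - ∑ k ∈ Finset.range (n+1), c k * cos ((2*k+1)*x) = R x - c n * cos ((2*n+1)*x) := by
        intro x; rw [Finset.sum_range_succ, hR]; ring
      simp only [hR1]
      constructor
      · intro m hm
        have e : ∀ x, (R x - c n * cos ((2*n+1)*x)) * cos ((2*m+1)*x) = R x * cos ((2*m+1)*x) - c n * (cos ((2*n+1)*x) * cos ((2*m+1)*x)) := by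
          intro x; ring
        simp only [e]
        rw [intervalIntegral.integral_sub, intervalIntegral.integral_const_mul, int_cos_cos, if_neg (by omega), i1 m (by omega)]
        · ring
        all_goals apply Continuous.intervalIntegrable; fun_prop
      · have e : ∀ x, (R x - c n * cos ((2*n+1)*x))^2 = R x^2 - 2 * c n * (R x * cos ((2*n+1)*x)) + c n^2 * (cos ((2*n+1)*x) * cos ((2*n+1)*x)) := by
          intro x; ring
        simp only [e]
        rw [intervalIntegral.integral_add, intervalIntegral.integral_sub, intervalIntegral.integral_const_mul, intervalIntegral.integral_const_mul, int_cos_cos, if_pos rfl, i1 n le_rfl, i2, Finset.sum_range_succ]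
        · ring
        all_goals apply Continuous.intervalIntegrable; fun_prop
  have h2 := (key n).2
  have h3 : 0 ≤ ∫ x in (0:ℝ)..(π/2), (h x - ∑ k ∈ Finset.range n, c k * cos ((2*k+1)*x))^2 :=
    intervalIntegral.integral_nonneg (by positivity) (fun x _ => sq_nonneg _)
  rw [h2] at h3
  have := pi_pos
  calc ∑ k ∈ Finset.range n, c k^2 = (4/π) * (π/4 * ∑ k ∈ Finset.range n, c k^2) := by field_simp
    _ ≤ _ := by gcongr; linarith

def pp (α : ℝ) (K k : ℕ) : ℝ := ii α ((K:ℤ)-k) + ii α ((K:ℤ)+k+1)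

theorem pp_eq (α : ℝ) (K k : ℕ) : pp α K k = (4/π) * ∫ x in (0:ℝ)..(π/2), (ee α x * cos ((2*K+1)*x)) * cos ((2*k+1)*x) := by
  have ce := ee_cont α
  have e : ∀ x : ℝ, (ee α x * cos ((2*K+1)*x)) * cos ((2*k+1)*x) = (1/2) * (ee α x * cos (2*((K:ℤ)-k:ℤ)*x) + ee α x * cos (2*((K:ℤ)+k+1:ℤ)*x)) := by
    intro x
    push_cast
    rw [show 2*((K:ℝ)-k)*x = (2*K+1)*x - (2*k+1)*x by ring, show 2*((K:ℝ)+k+1)*x = (2*K+1)*x + (2*k+1)*x by ring, cos_sub, cos_add]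
    ring
  simp only [e]
  rw [intervalIntegral.integral_const_mul, intervalIntegral.integral_add]
  · unfold pp ii; ring
  all_goals apply Continuous.intervalIntegrable; fun_prop

structure Coef (α t : ℝ) (K : ℕ) (D μ : ℝ) (g : ℕ → ℝ) : Prop where
  r0 : (1 - μ - 2*α*t) * g 0 = 2*α*(2+t) * g 1
  r1 : ∀ k : ℕ, ((2*(k+1:ℝ)+1)^2 - μ) * g (k+1) + 2*α*(2*(k+1)-t) * g k = 2*α*(2*(k+1)+2+t) * g (k+2)
  bes : ∀ n, ∑ k ∈ Finset.range n, (g k - pp α K k)^2 ≤ (D/(2*K+1))^2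
  mub : |μ - (2*K+1)^2| ≤ D

theorem coef_exists (α t : ℝ) {e : ℕ → ℝ} {y y1 : ℕ → ℝ → ℝ} {C : ℝ} (hS : SpecData (pot α t) e y y1 C) :
    ∃ D, 0 < D ∧ ∀ K, ∃ g, Coef α t K D (e K + 2*α^2) g := by
  refine ⟨2 * exp |α| * C + C + 2*α^2 + 1, by have := hS.hC; positivity, fun K => ⟨fun k => GG α (y K) k, ?_, ?_, ?_, ?_⟩⟩
  · have := GG_rec (hS.sol K) 0
    simp only [zero_sub, GG_neg] at this
    simp at this
    simp
    linear_combination -this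
  · intro k
    have := GG_rec (hS.sol K) (k+1)
    push_cast at this ⊢
    rw [add_sub_cancel_right, show (k:ℤ)+1+1 = k+2 by ring] at this
    linear_combination -this
  · intro n
    have cy : Continuous (y K) := continuous_iff_continuousAt.2 fun x => ((hS.sol K).h1 x).continuousAt
    have ce := ee_cont α
    have hb := bessel (fun x => ee α x * (y K x - cos ((2*K+1)*x))) (by fun_prop) n
    have e1 : ∀ k : ℕ, GG α (y K) k - pp α K k = (4/π) * ∫ x in (0:ℝ)..(π/2), (ee α x * (y K x - cos ((2*K+1)*x))) * cos ((2*k+1)*x) := by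
      intro k
      rw [pp_eq, GG, ← mul_sub, ← intervalIntegral.integral_sub]
      · congr 2; ext x; push_cast; ring
      all_goals apply Continuous.intervalIntegrable; fun_prop
    simp only [e1]
    refine hb.trans ?_
    have hC := hS.hC
    set E := exp |α| * (C/(2*K+1)) with hE
    have hE0 : 0 ≤ E := by positivity
    have h3 : ∫ x in (0:ℝ)..(π/2), (ee α x * (y K x - cos ((2*K+1)*x)))^2 ≤ ∫ x in (0:ℝ)..(π/2), E^2 := by
      apply intervalIntegral.integral_mono_on (by positivity)
      · apply Continuous.intervalIntegrable; fun_prop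
      · simp
      · intro x hx
        rw [← sq_abs, abs_mul, abs_of_pos (ee_pos α x)]
        have := hS.yb K x hx.1 hx.2
        have := ee_le α x
        have hp := ee_pos α x
        rw [hE]
        gcongr
    rw [intervalIntegral.integral_const] at h3
    calc (4/π) * ∫ x in (0:ℝ)..(π/2), (ee α x * (y K x - cos ((2*K+1)*x)))^2 ≤ (4/π) * ((π/2 - 0) • E^2) := by gcongr
      _ = 2 * E^2 := by simp; field_simp; ring
      _ ≤ (2*E)^2 := by nlinarith
      _ ≤ _ := by
        have e2 : 2*E = 2 * exp |α| * C / (2*K+1) := by rw [hE]; ring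
        rw [e2]
        gcongr
        nlinarith [sq_nonneg α]
  · have := hS.eb K
    have hC := hS.hC
    have : |e K + 2*α^2 - (2*K+1)^2| ≤ |e K - (2*K+1)^2| + 2*α^2 := by
      rw [show e K + 2*α^2 - (2*K+1)^2 = (e K - (2*K+1)^2) + 2*α^2 by ring]
      refine (abs_add_le _ _).trans ?_
      rw [abs_of_nonneg (show 0 ≤ 2*α^2 by positivity)]
    have : 0 ≤ 2 * exp |α| * C := by positivity
    linarith
end WH

namespace WH

theorem Coef.mono {α t : ℝ} {K : ℕ} {D D' μ : ℝ} {g : ℕ → ℝ} (h : Coef α t K D μ g) (hD : 0 ≤ D) (hDD : D ≤ D') :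
    Coef α t K D' μ g := ⟨h.r0, h.r1, fun n => (h.bes n).trans (by gcongr), h.mub.trans hDD⟩

theorem Coef.delta {α t : ℝ} {K : ℕ} {D μ : ℝ} {g : ℕ → ℝ} (h : Coef α t K D μ g) (hD : 0 ≤ D) (k : ℕ) :
    |g k - pp α K k| ≤ D/(2*K+1) := by
  apply abs_le_of_sq_le_sq _ (by positivity)
  refine le_trans ?_ (h.bes (k+1))
  exact Finset.single_le_sum (f := fun k => (g k - pp α K k)^2) (fun i _ => sq_nonneg _) (Finset.self_mem_range_succ k)

theorem pp_le (α : ℝ) (K k : ℕ) : |pp α K k| ≤ 2 * exp |α| := by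
  unfold pp
  refine (abs_add_le _ _).trans ?_
  linarith [ii_le α ((K:ℤ)-k), ii_le α ((K:ℤ)+k+1)]

theorem Coef.bdd {α t : ℝ} {K : ℕ} {D μ : ℝ} {g : ℕ → ℝ} (h : Coef α t K D μ g) (hD : 0 ≤ D) (k : ℕ) :
    |g k| ≤ 2 * exp |α| + D := by
  have h1 := h.delta hD k
  have h2 := pp_le α K k
  have h3 : D/(2*K+1) ≤ D := by
    apply div_le_self hD; have : (0:ℝ) ≤ K := Nat.cast_nonneg K
    linarith
  have : |g k| ≤ |g k - pp α K k| + |pp α K k| := by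
    have := abs_add_le (g k - pp α K k) (pp α K k); simpa using this
  linarith

/-- decay of coefficients -/
theorem Coef.decay {α t : ℝ} {K : ℕ} {D μ : ℝ} {g : ℕ → ℝ} (h : Coef α t K D μ g) (hD : 0 ≤ D) :
    ∃ c : ℝ, 0 ≤ c ∧ ∃ k0 : ℕ, ∀ k, k0 ≤ k → |g (k+1)| ≤ c / (k+1) := by
  set G := 2 * exp |α| + D with hG
  have hG0 : 0 ≤ G := by positivity
  obtain ⟨k0, hk0⟩ := exists_nat_gt μ
  refine ⟨2*|α| * (6+2*|t|)*G, by positivity, k0, fun k hk => ?_⟩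
  have hkμ : μ < k := lt_of_lt_of_le hk0 (by exact_mod_cast hk)
  have hk0 : (0:ℝ) ≤ k := Nat.cast_nonneg k
  have hd : ((k:ℝ)+1)^2 ≤ (2*((k:ℝ)+1)+1)^2 - μ := by nlinarith
  have hr := h.r1 k
  have b1 := h.bdd hD k
  have b2 := h.bdd hD (k+2)
  have e : ((2*((k:ℝ)+1)+1)^2 - μ) * g (k+1) = 2*α*(2*(k+1)+2+t) * g (k+2) - 2*α*(2*(k+1)-t) * g k := by linarith
  have h1 : ((k:ℝ)+1)^2 * |g (k+1)| ≤ 2*|α| * (6+2*|t|)*G*(k+1) := by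
    calc ((k:ℝ)+1)^2 * |g (k+1)| ≤ ((2*((k:ℝ)+1)+1)^2 - μ) * |g (k+1)| := by gcongr
      _ = |((2*((k:ℝ)+1)+1)^2 - μ) * g (k+1)| := by
        rw [abs_mul, abs_of_nonneg (a := (2*((k:ℝ)+1)+1)^2 - μ) (le_trans (by positivity) hd)]
      _ ≤ |2*α*(2*(k+1)+2+t) * g (k+2)| + |2*α*(2*(k+1)-t) * g k| := by rw [e]; exact abs_sub _ _
      _ = 2*|α| * |2*((k:ℝ)+1)+2+t| * |g (k+2)| + 2*|α| * |2*((k:ℝ)+1)-t| * |g k| := by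
        simp only [abs_mul, abs_two]
      _ ≤ 2*|α| * (2*((k:ℝ)+1)+2+|t|) * G + 2*|α| * (2*((k:ℝ)+1)+|t|) * G := by
        have i1 : |2*((k:ℝ)+1)+2+t| ≤ 2*((k:ℝ)+1)+2+|t| := by
          refine (abs_add_le _ _).trans ?_
          rw [abs_of_nonneg (by positivity : 0 ≤ 2*((k:ℝ)+1)+2)]
        have i2 : |2*((k:ℝ)+1)-t| ≤ 2*((k:ℝ)+1)+|t| := by
          refine (abs_sub _ _).trans ?_
          rw [abs_of_nonneg (by positivity : 0 ≤ 2*((k:ℝ)+1))]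
        gcongr
      _ = 2*|α| * G*(4*(k+1)+2+2*|t|) := by ring
      _ ≤ 2*|α| * G*((6+2*|t|)*(k+1)) := by
        gcongr
        nlinarith [abs_nonneg t, mul_nonneg (abs_nonneg t) hk0]
      _ = _ := by ring
  rw [le_div_iff₀ (by positivity)]
  have hk1 : (0:ℝ) < k+1 := by positivity
  nlinarith

theorem telescope {α t : ℝ} {K : ℕ} {D μ μ' : ℝ} {g g' : ℕ → ℝ} (h : Coef α t K D μ g) (h' : Coef α (-t) K D μ' g')
    (n : ℕ) : (μ - μ') * ∑ k ∈ Finset.range (n+1), (-1)^k * (g k * g' k) =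
      -(4*α*t*(g 0 * g' 0)) + (-1)^n * (2*α*((2*n+2-t)*(g n * g' (n+1)) - (2*n+2+t) * (g' n * g (n+1)))) := by
  induction n with
  | zero =>
    simp
    linear_combination -g' 0 * h.r0 + g 0 * h'.r0
  | succ n ih =>
    rw [Finset.sum_range_succ, mul_add, ih]
    have a := h.r1 n
    have b := h'.r1 n
    push_cast
    rw [pow_succ]
    linear_combination ((-1)^n * g' (n+1)) * a - (-1)^n * g (n+1) * b

theorem boundary_small {α t : ℝ} {K : ℕ} {D μ μ' : ℝ} {g g' : ℕ → ℝ} (h : Coef α t K D μ g) (h' : Coef α (-t) K D μ' g')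
    (hD : 0 ≤ D) (ε : ℝ) (hε : 0 < ε) : ∃ n0 : ℕ, ∀ n, n0 ≤ n →
    |(-1)^n * (2*α*((2*n+2-t)*(g n * g' (n+1)) - (2*n+2+t) * (g' n * g (n+1))))| ≤ ε := by
  obtain ⟨c, hc, k0, hk⟩ := h.decay hD
  obtain ⟨c', hc', k0', hk'⟩ := h'.decay hD
  obtain ⟨n1, hn1⟩ := exists_nat_gt ((2*|α| * (2*(4+|t|)*(c*c')))/ε)
  refine ⟨k0 + k0' + n1 + 1, fun n hn => ?_⟩
  obtain ⟨m, rfl⟩ : ∃ m, n = m+1 := ⟨n-1, by omega⟩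
  have a1 := hk m (by omega)
  have a2 := hk (m+1) (by omega)
  have a3 := hk' m (by omega)
  have a4 := hk' (m+1) (by omega)
  push_cast at a1 a2 a3 a4 ⊢
  have hm : (n1:ℝ) ≤ m := by exact_mod_cast (by omega : n1 ≤ m)
  have hm0 : (0:ℝ) ≤ m := Nat.cast_nonneg m
  have i1 : |2*((m:ℝ)+1)+2+t| ≤ (4+|t|)*(m+1) := by
    refine (abs_add_le _ _).trans ?_
    rw [abs_of_nonneg (by positivity : 0 ≤ 2*((m:ℝ)+1)+2)]
    nlinarith [mul_nonneg (abs_nonneg t) hm0]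
  have i2 : |2*((m:ℝ)+1)+2-t| ≤ (4+|t|)*(m+1) := by
    refine (abs_sub _ _).trans ?_
    rw [abs_of_nonneg (by positivity : 0 ≤ 2*((m:ℝ)+1)+2)]
    nlinarith [mul_nonneg (abs_nonneg t) hm0]
  have j2 : c/((m:ℝ)+1+1) ≤ c/(m+1) := by gcongr; linarith
  have j4 : c'/((m:ℝ)+1+1) ≤ c'/(m+1) := by gcongr; linarith
  rw [abs_mul, abs_pow, abs_neg, abs_one, one_pow, one_mul]
  calc _ = 2*|α| * |(2*((m:ℝ)+1)+2-t)*(g (m+1) * g' (m+1+1)) - (2*((m:ℝ)+1)+2+t) * (g' (m+1) * g (m+1+1))| := by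
        rw [abs_mul, abs_mul, abs_two]
    _ ≤ 2*|α| * (|2*((m:ℝ)+1)+2-t| * (|g (m+1)| * |g' (m+1+1)|) + |2*((m:ℝ)+1)+2+t| * (|g' (m+1)| * |g (m+1+1)|)) := by
        gcongr
        refine (abs_sub _ _).trans ?_
        simp only [abs_mul]; exact le_rfl
    _ ≤ 2*|α| * (((4+|t|)*(m+1)) * ((c/(m+1)) * (c'/(m+1))) + ((4+|t|)*(m+1)) * ((c'/(m+1)) * (c/(m+1)))) := by
        gcongr
        · exact a4.trans j4
        · exact a2.trans j2
    _ = (2*|α| * (2*(4+|t|)*(c*c')))/(m+1) := by field_simp; ring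
    _ ≤ ε := by
        rw [div_le_iff₀ (by positivity)]
        rw [div_lt_iff₀ hε] at hn1
        nlinarith
end WH

namespace WH

theorem ii_summable (α : ℝ) : Summable (fun j : ℤ => |ii α j|) := by
  obtain ⟨B, hB, h⟩ := ii_decay α
  have s1 : Summable (fun n : ℤ => 1/(n:ℝ)^2) := Real.summable_one_div_int_pow.2 (by norm_num)
  have s2 : Summable (fun n : ℤ => if n = 0 then (1:ℝ) else 0) := (hasSum_ite_eq (0:ℤ) (1:ℝ)).summable
  refine Summable.of_nonneg_of_le (fun _ => abs_nonneg _) (fun j => ?_) ((s1.add s2).mul_left B)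
  refine (h j).trans ?_
  rw [div_eq_mul_inv]
  gcongr
  by_cases hj : j = 0
  · subst hj; simp
  · have : (0:ℝ) < (j:ℝ)^2 := by positivity
    simp only [hj, if_false, add_zero, ← one_div]
    gcongr
    linarith

theorem ii_sum (α : ℝ) : ∃ Z : ℝ, 0 < Z ∧ ∀ K n : ℕ, ∑ k ∈ Finset.range n, |ii α ((K:ℤ)-k)| ≤ Z := by
  refine ⟨(∑' j : ℤ, |ii α j|) + 1, by have : 0 ≤ ∑' j : ℤ, |ii α j| := tsum_nonneg (fun j : ℤ => abs_nonneg (ii α j))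
                                       linarith, fun K n => ?_⟩
  have hinj : Function.Injective (fun k : ℕ => (K:ℤ) - k) := by
    intro a b hab; simp at hab; exact hab
  have e : ∑ k ∈ Finset.range n, |ii α ((K:ℤ)-k)| = ∑ j ∈ (Finset.range n).image (fun k : ℕ => (K:ℤ) - k), |ii α j| := by
    rw [Finset.sum_image]; intro a _ b _ hab; exact hinj hab
  rw [e]
  have := (ii_summable α).sum_le_tsum ((Finset.range n).image (fun k : ℕ => (K:ℤ) - k)) (fun j _ => abs_nonneg _)
  linarith

theorem ii_tail (α : ℝ) : ∃ Z : ℝ, 0 < Z ∧ ∀ K n : ℕ, ∑ k ∈ Finset.range n, |ii α ((K:ℤ)+k+1)| ≤ Z/(2*K+1) := by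
  obtain ⟨B, hB, h⟩ := ii_decay α
  refine ⟨4*B, by positivity, fun K n => ?_⟩
  have key : ∑ k ∈ Finset.range n, |ii α ((K:ℤ)+k+1)| ≤ 2*B*(1/(K+1) - 1/(K+n+1)) := by
    induction n with
    | zero => simp
    | succ n ih =>
      rw [Finset.sum_range_succ]
      have h1 := h ((K:ℤ)+n+1)
      push_cast at h1 ⊢
      have h2 : B/(1+((K:ℝ)+n+1)^2) ≤ 2*B*(1/(K+n+1) - 1/(K+(n+1)+1)) := by
        rw [div_sub_div _ _ (by positivity) (by positivity), ← mul_div_assoc, div_le_div_iff₀ (by positivity) (by positivity)]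
        have hK : (0:ℝ) ≤ (K:ℝ)+n := by positivity
        have : (1:ℝ) * (K+(n+1)+1) - (K+n+1)*1 = 1 := by ring
        rw [this]
        nlinarith [mul_nonneg hB.le (mul_nonneg hK hK), mul_nonneg hB.le hK]
      nlinarith
  refine key.trans ?_
  have h0 : 0 ≤ 1/((K:ℝ)+n+1) := by positivity
  have : 4*B/(2*(K:ℝ)+1) ≥ 2*B*(1/(K+1)) := by
    rw [ge_iff_le, mul_one_div, div_le_div_iff₀ (by positivity) (by positivity)]
    nlinarith
  nlinarith

theorem main_sum (α : ℝ) : ∃ C : ℝ, 0 < C ∧ ∀ K : ℕ, ∃ n0 : ℕ, ∀ n, n0 ≤ n →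
    |(-1)^K * ∑ k ∈ Finset.range n, (-1)^k * (ii α ((K:ℤ)-k))^2 - 1| ≤ C/(2*K+1) := by
  obtain ⟨Z, hZ, hz⟩ := ii_tail α
  refine ⟨exp |α| * Z + 1, by positivity, fun K => ?_⟩
  have hs := (Equiv.subLeft (K:ℤ)).hasSum_iff.2 (ii_parseval α)
  have h1 := HasSum.nat_add_neg_add_one hs
  have h2 := h1.tendsto_sum_nat
  have hε : (0:ℝ) < 1/(2*K+1) := by positivity
  obtain ⟨n0, hn0⟩ := (Metric.tendsto_atTop.1 h2) _ hε
  refine ⟨n0, fun n hn => ?_⟩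
  have h3 := (hn0 n hn).le
  rw [Real.dist_eq, Finset.sum_add_distrib] at h3
  simp only [Function.comp, Equiv.subLeft_apply] at h3
  have e1 : ∑ x ∈ Finset.range n, (-1:ℝ)^((K:ℤ)-(x:ℤ)) * ii α ((K:ℤ)-x)^2 =
     (-1)^K * ∑ k ∈ Finset.range n, (-1)^k * (ii α ((K:ℤ)-k))^2 := by
    rw [Finset.mul_sum]
    refine Finset.sum_congr rfl fun x _ => ?_
    rw [zpow_sub₀ (by norm_num), zpow_natCast, zpow_natCast, ← mul_assoc]
    congr 1
    rcases neg_one_pow_eq_or ℝ x with h | h <;> rw [h] <;> ring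
  rw [e1] at h3
  have e2 : |∑ x ∈ Finset.range n, (-1:ℝ)^((K:ℤ)-(-((x:ℤ)+1))) * ii α ((K:ℤ)-(-((x:ℤ)+1)))^2| ≤ exp |α| * (Z/(2*K+1)) := by
    refine (Finset.abs_sum_le_sum_abs _ _).trans ?_
    refine le_trans ?_ (mul_le_mul_of_nonneg_left (hz K n) (exp_pos _).le)
    rw [Finset.mul_sum]
    refine Finset.sum_le_sum fun x _ => ?_
    have : (K:ℤ)-(-((x:ℤ)+1)) = (K:ℤ)+x+1 := by ring
    rw [this, abs_mul, abs_zpow, abs_neg, abs_one, one_zpow, one_mul, abs_pow, sq]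
    exact mul_le_mul_of_nonneg_right (ii_le α _) (abs_nonneg _)
  have : (exp |α| * Z + 1)/(2*(K:ℝ)+1) = exp |α| * (Z/(2*K+1)) + 1/(2*K+1) := by ring
  rw [this]
  rw [abs_le] at *
  constructor <;> linarith [h3.1, h3.2, e2.1, e2.2]

theorem full_sum (α t D : ℝ) (hD : 0 ≤ D) : ∃ C : ℝ, 0 < C ∧ ∀ (K : ℕ) (μ μ' : ℝ) (g g' : ℕ → ℝ),
    Coef α t K D μ g → Coef α (-t) K D μ' g' → ∃ n0 : ℕ, ∀ n, n0 ≤ n →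
    |(-1)^K * ∑ k ∈ Finset.range n, (-1)^k * (g k * g' k) - 1| ≤ C/(2*K+1) := by
  obtain ⟨Z, hZ, hz⟩ := ii_tail α
  obtain ⟨Y, hY, hy⟩ := ii_sum α
  obtain ⟨C, hC, hc⟩ := main_sum α
  refine ⟨C + 2*D*(Y+Z) + D^2 + 3 * exp |α| * Z, by positivity, fun K μ μ' g g' hg hg' => ?_⟩
  obtain ⟨n0, hn0⟩ := hc K
  refine ⟨n0, fun n hn => ?_⟩
  have h1 := hn0 n hn
  set N : ℝ := 2*K+1 with hN
  have hN1 : 1 ≤ N := by rw [hN]; have : (0:ℝ) ≤ K := Nat.cast_nonneg K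
                         linarith
  have hNp : 0 < N := by linarith
  have tb : ∀ k : ℕ, |(-1)^k * (g k * g' k) - (-1)^k * (ii α ((K:ℤ)-k))^2| ≤
      2*(D/N)*|ii α ((K:ℤ)-k)| + (2*(D/N) + 3 * exp |α|)*|ii α ((K:ℤ)+k+1)| + ((g k - pp α K k)^2 + (g' k - pp α K k)^2)/2 := by
    intro k
    have d1 := hg.delta hD k
    have d2 := hg'.delta hD k
    rw [← hN] at d1 d2
    set δ := g k - pp α K k with hδ
    set δ' := g' k - pp α K k with hδ'
    have hp : pp α K k = ii α ((K:ℤ)-k) + ii α ((K:ℤ)+k+1) := rfl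
    have e1 := ii_le α ((K:ℤ)-k)
    have e2 := ii_le α ((K:ℤ)+k+1)
    set a := ii α ((K:ℤ)-k)
    set b := ii α ((K:ℤ)+k+1)
    have : (-1)^k * (g k * g' k) - (-1)^k * a^2 = (-1)^k * ((a+b)*δ + (a+b)*δ' + δ*δ' + b*(2*a+b)) := by
      have g1 : g k = a + b + δ := by rw [hδ, hp]; ring
      have g2 : g' k = a + b + δ' := by rw [hδ', hp]; ring
      rw [g1, g2]; ring
    rw [this, abs_mul, abs_pow, abs_neg, abs_one, one_pow, one_mul]
    have ab : |a+b| ≤ |a| + |b| := abs_add_le _ _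
    have q1 : |(a+b)*δ| ≤ (|a|+|b|)*(D/N) := by rw [abs_mul]; gcongr
    have q2 : |(a+b)*δ'| ≤ (|a|+|b|)*(D/N) := by rw [abs_mul]; gcongr
    have q3 : |δ*δ'| ≤ (δ^2+δ'^2)/2 := by
      rw [abs_le]; constructor <;> nlinarith [sq_nonneg (δ+δ'), sq_nonneg (δ-δ')]
    have q4 : |b*(2*a+b)| ≤ |b| * (3 * exp |α|) := by
      rw [abs_mul]
      gcongr
      refine (abs_add_le _ _).trans ?_
      rw [abs_mul, abs_two]; linarith
    have r1 := abs_add_le ((a+b)*δ + (a+b)*δ' + δ*δ') (b*(2*a+b))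
    have r2 := abs_add_le ((a+b)*δ + (a+b)*δ') (δ*δ')
    have r3 := abs_add_le ((a+b)*δ) ((a+b)*δ')
    nlinarith
  have S : |∑ k ∈ Finset.range n, (-1)^k * (g k * g' k) - ∑ k ∈ Finset.range n, (-1)^k * (ii α ((K:ℤ)-k))^2| ≤
      2*(D/N)*Y + (2*(D/N) + 3 * exp |α|)*(Z/N) + (D/N)^2 := by
    rw [← Finset.sum_sub_distrib]
    refine (Finset.abs_sum_le_sum_abs _ _).trans ?_
    refine (Finset.sum_le_sum fun k _ => tb k).trans ?_
    rw [Finset.sum_add_distrib, Finset.sum_add_distrib, ← Finset.mul_sum, ← Finset.mul_sum, ← Finset.sum_div, Finset.sum_add_distrib]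
    have b1 := hg.bes n
    have b2 := hg'.bes n
    have b3 : 2*(D/N) * ∑ k ∈ Finset.range n, |ii α ((K:ℤ)-k)| ≤ 2*(D/N)*Y := by
      gcongr; exact hy K n
    have b4 : (2*(D/N) + 3 * exp |α|) * ∑ k ∈ Finset.range n, |ii α ((K:ℤ)+k+1)| ≤ (2*(D/N) + 3 * exp |α|)*(Z/N) := by
      gcongr; exact hz K n
    rw [← hN] at b1 b2
    linarith
  have S2 : 2*(D/N)*Y + (2*(D/N) + 3 * exp |α|)*(Z/N) + (D/N)^2 ≤ (2*D*(Y+Z) + D^2 + 3 * exp |α| * Z)/N := by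
    have w : 1/N ≤ 1 := by rw [div_le_one hNp]; exact hN1
    have w0 : 0 ≤ 1/N := by positivity
    have : (2*D*(Y+Z) + D^2 + 3 * exp |α| * Z)/N - (2*(D/N)*Y + (2*(D/N) + 3 * exp |α|)*(Z/N) + (D/N)^2) =
      (1/N)*(1-1/N)*(2*D*Z + D^2) := by ring
    have : 0 ≤ (1/N)*(1-1/N)*(2*D*Z + D^2) := by
      have : 0 ≤ 1-1/N := by linarith
      positivity
    linarith
  have S3 : |(-1)^K * ∑ k ∈ Finset.range n, (-1)^k * (g k * g' k) - (-1)^K * ∑ k ∈ Finset.range n, (-1)^k * (ii α ((K:ℤ)-k))^2| ≤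
      (2*D*(Y+Z) + D^2 + 3 * exp |α| * Z)/N := by
    rw [← mul_sub, abs_mul, abs_pow, abs_neg, abs_one, one_pow, one_mul]; linarith
  have : (C + 2*D*(Y+Z) + D^2 + 3 * exp |α| * Z)/N = C/N + (2*D*(Y+Z) + D^2 + 3 * exp |α| * Z)/N := by ring
  rw [this]
  rw [abs_le] at *
  constructor <;> linarith [h1.1, h1.2, S3.1, S3.2]

theorem split (α t D : ℝ) (hD : 0 ≤ D) : ∃ C : ℝ, 0 < C ∧ ∀ (K : ℕ) (μ μ' : ℝ) (g g' : ℕ → ℝ),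
    Coef α t K D μ g → Coef α (-t) K D μ' g' → 
    abs (|μ - μ'| - |4*α*t*(g 0 * g' 0)|) ≤ C/(2*K+1) * |μ - μ'| := by
  obtain ⟨C, hC, h⟩ := full_sum α t D hD
  refine ⟨C, hC, fun K μ μ' g g' hg hg' => ?_⟩
  obtain ⟨n0, hn0⟩ := h K μ μ' g g' hg hg'
  refine le_of_forall_pos_le_add fun ε hε => ?_
  obtain ⟨n1, hn1⟩ := boundary_small hg hg' hD ε hε
  have h1 := hn0 (n0+n1+1) (by omega)
  have h2 := hn1 (n0+n1) (by omega)
  have h3 := telescope hg hg' (n0+n1)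
  set S := ∑ k ∈ Finset.range (n0+n1+1), (-1)^k * (g k * g' k)
  generalize (-1)^(n0+n1) * (2*α*((2*((n0+n1:ℕ):ℝ)+2-t)*(g (n0+n1) * g' (n0+n1+1)) - (2*((n0+n1:ℕ):ℝ)+2+t) * (g' (n0+n1) * g (n0+n1+1)))) = R at *
  have h4 : |(|S| - 1)| ≤ C/(2*K+1) := by
    have := abs_abs_sub_abs_le ((-1)^K*S) 1
    rw [abs_mul, abs_pow, abs_neg, abs_one, one_pow, one_mul] at this
    exact this.trans h1
  have h5 : |(|(μ-μ')*S| - |4*α*t*(g 0 * g' 0)|)| ≤ ε := by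
    have := abs_abs_sub_abs_le ((μ-μ')*S) (-(4*α*t*(g 0 * g' 0)))
    rw [abs_neg] at this
    refine this.trans ?_
    rw [h3]; simpa using h2
  have h6 : |(|(μ-μ')| - |(μ-μ')*S|)| ≤ C/(2*K+1) * |μ - μ'| := by
    have : |(μ-μ')| - |(μ-μ')*S| = -(|μ-μ'| * (|S| - 1)) := by rw [abs_mul]; ring
    rw [this, abs_neg, abs_mul, abs_abs, mul_comm]
    gcongr
  have := abs_sub_le (|(μ-μ')|) (|(μ-μ')*S|) (|4*α*t*(g 0 * g' 0)|)
  linarith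
end WH

namespace WH

/-- diagonal entries -/
def DD (μ : ℝ) (k : ℕ) : ℝ := (2*(k:ℝ)+1)^2 - μ

/-- recursion coefficient -/
def eps (α t μ : ℝ) (k : ℕ) : ℝ := 4*α^2*(4*((k:ℝ)+1)^2 - t^2)/(DD μ (k+1) * DD μ k)

/-- normalised coefficients -/
def UU (α t μ : ℝ) : ℕ → ℝ
  | 0 => 1
  | 1 => 1 - 2*α*t/DD μ 0
  | (k+2) => UU α t μ (k+1) + eps α t μ k * UU α t μ k

theorem gron (e x y : ℕ → ℝ) (c : ℝ) (h0 : |e 0| ≤ c) (h1 : |e 1| ≤ c) (n : ℕ) 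
    (h : ∀ k < n, e (k+2) = e (k+1) + x k * e k + y k) :
    |e n| ≤ exp (∑ k ∈ Finset.range n, |x k|) * (c + ∑ k ∈ Finset.range n, |y k|) ∧ 
    |e (n+1)| ≤ exp (∑ k ∈ Finset.range n, |x k|) * (c + ∑ k ∈ Finset.range n, |y k|) := by
  have hc : 0 ≤ c := (abs_nonneg _).trans h0
  induction n with
  | zero => simpa using ⟨h0, h1⟩
  | succ n ih =>
    obtain ⟨i1, i2⟩ := ih (fun k hk => h k (by omega))
    rw [Finset.sum_range_succ, Finset.sum_range_succ, exp_add]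
    set X := ∑ k ∈ Finset.range n, |x k|
    set Y := ∑ k ∈ Finset.range n, |y k|
    have hX : 0 ≤ X := Finset.sum_nonneg fun _ _ => abs_nonneg _
    have hY : 0 ≤ Y := Finset.sum_nonneg fun _ _ => abs_nonneg _
    have e1 : 1 ≤ exp X := one_le_exp hX
    have e2 : 1 + |x n| ≤ exp |x n| := by linarith [add_one_le_exp |x n|]
    have hx := abs_nonneg (x n)
    have hy := abs_nonneg (y n)
    have key : exp X * (c+Y) * (1+|x n|) + |y n| ≤ exp X * exp |x n| * (c + (Y + |y n|)) := by
      have q1 : exp X * (c+Y) * (1+|x n|) ≤ exp X * (c+Y) * exp |x n| := by gcongr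
      have q2 : |y n| ≤ exp X * exp |x n| * |y n| := by
        have : 1 ≤ exp X * exp |x n| := one_le_mul_of_one_le_of_one_le e1 (by linarith)
        nlinarith
      nlinarith
    have p : 0 ≤ exp X * (c+Y) := by positivity
    constructor
    · nlinarith [mul_nonneg p hx]
    · rw [h n (by omega)]
      have r1 := abs_add_le (e (n+1) + x n * e n) (y n)
      have r2 := abs_add_le (e (n+1)) (x n * e n)
      rw [abs_mul] at r2
      have r3 : |x n| * |e n| ≤ |x n| * (exp X * (c+Y)) := by gcongr
      linarith

theorem DD_bound {K : ℕ} {D μ : ℝ} (hμ : |μ - (2*K+1)^2| ≤ D) (hDK : D ≤ K+1) {k : ℕ} (hk : k < K) :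
    3*((K:ℝ)-k)*(K+1) ≤ -(DD μ k) := by
  have hk' : (k:ℝ) + 1 ≤ K := by exact_mod_cast hk
  have hk0 : (0:ℝ) ≤ k := Nat.cast_nonneg k
  rw [abs_le] at hμ
  unfold DD
  nlinarith [hμ.1, hμ.2]

theorem prod_id {α t : ℝ} {K : ℕ} {D μ : ℝ} {g : ℕ → ℝ} (h : Coef α t K D μ g) (hne : ∀ k < K, DD μ k ≠ 0) (k : ℕ) :
    (k ≤ K → g k * ∏ i ∈ Finset.range k, (2*α*(2*((i:ℝ)+1)+t)) = g 0 * UU α t μ k * ∏ i ∈ Finset.range k, DD μ i) ∧ 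
    (k+1 ≤ K → g (k+1) * ∏ i ∈ Finset.range (k+1), (2*α*(2*((i:ℝ)+1)+t)) = g 0 * UU α t μ (k+1) * ∏ i ∈ Finset.range (k+1), DD μ i) := by
  induction k with
  | zero =>
    refine ⟨fun _ => by simp [UU], fun hK => ?_⟩
    have h0 := hne 0 (by omega)
    have hr := h.r0
    simp only [UU, zero_add, Finset.prod_range_one]
    have : g 0 * (1 - 2*α*t/DD μ 0) * DD μ 0 = g 0 * (DD μ 0 - 2*α*t) := by field_simp
    rw [this]
    unfold DD; push_cast
    linear_combination -hr
  | succ k ih =>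
    refine ⟨ih.2, fun hK => ?_⟩
    have i1 := ih.1 (by omega)
    have i2 := ih.2 (by omega)
    have n0 := hne k (by omega)
    have n1 := hne (k+1) (by omega)
    have hr := h.r1 k
    have he : eps α t μ k * (DD μ (k+1) * DD μ k) = 4*α^2*(4*((k:ℝ)+1)^2 - t^2) := by
      unfold eps; field_simp
    have hd : DD μ (k+1) = (2*((k:ℝ)+1)+1)^2 - μ := by unfold DD; push_cast; ring
    rw [← hd] at hr
    rw [Finset.prod_range_succ, Finset.prod_range_succ _ (k+1)]
    simp only [UU]
    rw [Finset.prod_range_succ] at i2 ⊢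
    rw [Finset.prod_range_succ _ k] at i2 ⊢
    push_cast
    set P := ∏ i ∈ Finset.range k, (2*α*(2*((i:ℝ)+1)+t))
    set Q := ∏ i ∈ Finset.range k, DD μ i
    linear_combination (-P*(2*α*(2*((k:ℝ)+1)+t))) * hr + DD μ (k+1) * i2 + (2*α*(2*((k:ℝ)+1)+t))*(2*α*(2*((k:ℝ)+1)-t)) * i1 - g 0 * UU α t μ k * Q * he

theorem eps_bound {α t : ℝ} {K : ℕ} {D μ : ℝ} (hμ : |μ - (2*K+1)^2| ≤ D) (hDK : D ≤ K+1) {k : ℕ} (hk : k + 1 < K) :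
    |eps α t μ k| ≤ 4*α^2*(4+t^2)/(((K:ℝ)-(k+1))*(K-k)) := by
  have hk' : (k:ℝ) + 2 ≤ K := by exact_mod_cast hk
  have hk0 : (0:ℝ) ≤ k := Nat.cast_nonneg k
  have d1 := DD_bound hμ hDK (show k < K by omega)
  have d2 := DD_bound hμ hDK hk
  push_cast at d2
  have p1 : 0 < (K:ℝ)-k := by linarith
  have p2 : 0 < (K:ℝ)-(k+1) := by linarith
  have hK : (0:ℝ) < K := by linarith
  have q1 : 0 < 3*((K:ℝ)-k)*(K+1) := by positivity
  have q2 : 0 < 3*((K:ℝ)-(k+1))*(K+1) := by positivity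
  unfold eps
  rw [abs_div, abs_mul, abs_of_nonneg (by positivity : 0 ≤ 4*α^2)]
  have hden : ((K:ℝ)-(k+1))*(K-k)*K^2 ≤ |DD μ (k+1) * DD μ k| := by
    rw [show DD μ (k+1) * DD μ k = (-DD μ (k+1)) * (-DD μ k) by ring, abs_of_nonneg (mul_nonneg (by linarith) (by linarith))]
    calc ((K:ℝ)-(k+1))*(K-k)*K^2 ≤ (3*((K:ℝ)-(k+1))*(K+1))*(3*((K:ℝ)-k)*(K+1)) := by
          have : (K:ℝ)^2 ≤ 9*(K+1)^2 := by nlinarith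
          calc _ ≤ ((K:ℝ)-(k+1))*(K-k)*(9*(K+1)^2) := by gcongr
            _ = _ := by ring
      _ ≤ _ := by gcongr; linarith
  have hnum : |4*((k:ℝ)+1)^2 - t^2| ≤ (4+t^2)*K^2 := by
    have : 1 ≤ (K:ℝ)^2 := by nlinarith
    have : ((k:ℝ)+1)^2 ≤ (K:ℝ)^2 := by nlinarith
    rw [abs_le]; constructor <;> nlinarith [sq_nonneg t, sq_nonneg ((k:ℝ)+1)]
  calc _ ≤ 4*α^2*((4+t^2)*K^2)/(((K:ℝ)-(k+1))*(K-k)*K^2) := by gcongr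
    _ = _ := by field_simp

theorem aux_a1 {j K t : ℝ} (hj : 1 ≤ j) (hK : j + 1 ≤ K) : |-(4*K*j)+3*j^2-2*K+j-t^2| ≤ (6+t^2)*(j*K) := by
  have jK1 : 1 ≤ j*K := by nlinarith
  have h1 : t^2 ≤ t^2*(j*K) := le_mul_of_one_le_right (sq_nonneg t) jK1
  have h2 : K ≤ j*K := by nlinarith
  have h3 : j^2 ≤ j*K := by nlinarith
  have h4 : j ≤ j*K := by nlinarith
  rw [abs_le]; constructor <;> nlinarith [sq_nonneg t, sq_nonneg j]

theorem aux_a2 {j K ρ : ℝ} (hj : 1 ≤ j) (hK : j + 1 ≤ K) (h : -(K+1) ≤ ρ ∧ ρ ≤ K+1) :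
    |4*(j+1)*(2*K-j)+4*j*(2*K+1-j)+ρ| ≤ 18*((j+1)*K) := by
  have h2 : K ≤ j*K := by nlinarith
  have h3 : j^2 ≤ j*K := by nlinarith
  have e : 4*(j+1)*(2*K-j)+4*j*(2*K+1-j)+ρ = 16*(j*K)+8*K-8*j^2+ρ := by ring
  rw [e, abs_le]; constructor <;> nlinarith [sq_nonneg j]

set_option maxHeartbeats 1000000 in
theorem eps_diff {α t : ℝ} {K : ℕ} {D μ : ℝ} (hμ : |μ - (2*K+1)^2| ≤ D) (hDK : D ≤ K+1) {k : ℕ} (hk : k + 1 < K) :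
    |eps α t μ k - α^2/4/(((K:ℝ)-(k+1))*(K-k))| ≤ α^2*(16*(6+t^2)+18*D)/(K*((K:ℝ)-k)) := by
  have hk' : (k:ℝ) + 2 ≤ K := by exact_mod_cast hk
  have hk0 : (0:ℝ) ≤ k := Nat.cast_nonneg k
  have d1 := DD_bound hμ hDK (show k < K by omega)
  have d2 := DD_bound hμ hDK hk
  have hD0 : 0 ≤ D := (abs_nonneg _).trans hμ
  push_cast at d2
  obtain ⟨j, hj⟩ : ∃ j : ℝ, j = (K:ℝ)-(k+1) := ⟨_, rfl⟩
  have hj1 : 1 ≤ j := by linarith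
  have hjK : j + 1 ≤ K := by linarith
  have kk : (k:ℝ) = K - j - 1 := by linarith
  obtain ⟨ρ, hρ⟩ : ∃ ρ : ℝ, ρ = μ - (2*K+1)^2 := ⟨_, rfl⟩
  rw [← hρ] at hμ
  have hm : μ = (2*K+1)^2 + ρ := by linarith
  have D1 : DD μ k = -(4*(j+1)*(2*K-j)+ρ) := by unfold DD; rw [hm, kk]; ring
  have D2 : DD μ (k+1) = -(4*j*(2*K+1-j)+ρ) := by unfold DD; push_cast; rw [hm, kk]; ring
  have e1 : (K:ℝ)-k = j+1 := by linarith
  have hK : (0:ℝ) < K := by linarith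
  rw [D1, e1, neg_neg] at d1
  rw [D2, ← hj, neg_neg] at d2
  set X := 4*(j+1)*(2*K-j)+ρ with hX
  set Y := 4*j*(2*K+1-j)+ρ with hY
  have X0 : (j+1)*K ≤ X := by nlinarith
  have Y0 : j*K ≤ Y := by nlinarith
  have hXp : 0 < X := by nlinarith
  have hYp : 0 < Y := by nlinarith
  unfold eps
  rw [D1, D2, ← hj, e1]
  have : (k:ℝ)+1 = K - j := by linarith
  rw [this]
  have key : 4*α^2*(4*((K:ℝ)-j)^2 - t^2)/(-Y * -X) - α^2/4/(j*(j+1)) =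
     α^2*(16*j*(j+1)*(4*((K:ℝ)-j)^2 - t^2) - X*Y)/(4*(j*(j+1))*(X*Y)) := by
    have : j ≠ 0 := by linarith
    have : j+1 ≠ 0 := by linarith
    field_simp
    ring
  rw [key, abs_div, abs_mul, abs_of_nonneg (sq_nonneg α), abs_of_pos (by positivity : 0 < 4*(j*(j+1))*(X*Y))]
  have num : |16*j*(j+1)*(4*((K:ℝ)-j)^2 - t^2) - X*Y| ≤ (16*(6+t^2)+18*D)*(j^2*(j+1)*K) := by
    have ex : 16*j*(j+1)*(4*((K:ℝ)-j)^2 - t^2) - X*Y = 16*(j*(j+1))*(-(4*K*j)+3*j^2-2*K+j-t^2) - ρ*(4*(j+1)*(2*K-j)+4*j*(2*K+1-j)+ρ) := by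
      rw [hX, hY]; ring
    rw [ex]
    have a1 : |-(4*K*j)+3*j^2-2*K+j-t^2| ≤ (6+t^2)*(j*K) := by
      exact aux_a1 hj1 hjK
    have a2 : |4*(j+1)*(2*K-j)+4*j*(2*K+1-j)+ρ| ≤ 18*((j+1)*K) := by
      exact aux_a2 hj1 hjK (abs_le.1 (hμ.trans hDK))
    refine (abs_sub _ _).trans ?_
    rw [abs_mul, abs_mul ρ, abs_of_nonneg (by positivity : 0 ≤ 16*(j*(j+1)))]
    calc _ ≤ 16*(j*(j+1))*((6+t^2)*(j*K)) + D*(18*((j+1)*K)) := by gcongr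
      _ = 16*(6+t^2)*(j^2*(j+1)*K) + 18*D*(1*(j+1)*K) := by ring
      _ ≤ 16*(6+t^2)*(j^2*(j+1)*K) + 18*D*(j^2*(j+1)*K) := by
        gcongr; nlinarith
      _ = _ := by ring
  calc _ ≤ α^2*((16*(6+t^2)+18*D)*(j^2*(j+1)*K))/(1*(j*(j+1))*(((j+1)*K)*(j*K))) := by
        gcongr; norm_num
    _ = _ := by
      have : j ≠ 0 := by linarith
      have : j+1 ≠ 0 := by linarith
      field_simp
end WH

namespace WH

theorem tele (K n : ℕ) (h : n + 1 ≤ K) : 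
    ∑ k ∈ Finset.range n, 1/(((K:ℝ)-(k+1))*(K-k)) ≤ 1/((K:ℝ)-n) := by
  induction n with
  | zero => simp
  | succ n ih =>
    rw [Finset.sum_range_succ]
    have h1 := ih (by omega)
    have h' : (n:ℝ) + 2 ≤ K := by exact_mod_cast h
    push_cast
    have p1 : (0:ℝ) < K - n := by linarith
    have p2 : (0:ℝ) < K - (n+1) := by linarith
    have : 1/((K:ℝ)-n) + 1/(((K:ℝ)-(n+1))*(K-n)) = 1/((K:ℝ)-(n+1)) := by
      field_simp
      ring
    linarith

theorem harm (K : ℕ) : ∑ k ∈ Finset.range K, 1/((K:ℝ)-k) ≤ 1 + log K := by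
  have h := harmonic_le_one_add_log K
  have e : ((harmonic K : ℚ) : ℝ) = ∑ k ∈ Finset.range K, 1/((K:ℝ)-k) := by
    rw [harmonic]
    push_cast
    rw [← Finset.sum_range_reflect]
    refine Finset.sum_congr rfl fun k hk => ?_
    have := Finset.mem_range.1 hk
    rw [one_div]
    congr 1
    have : ((K - 1 - k : ℕ):ℝ) = (K:ℝ) - 1 - k := by
      rw [Nat.cast_sub (by omega), Nat.cast_sub (by omega)]; simp
    rw [this]; ring
  rw [← e]; exact h

/-- error rate -/
def ll (K : ℕ) : ℝ := (1 + log K)/K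

theorem ll_ge {K : ℕ} (hK : 1 ≤ K) : 1/(K:ℝ) ≤ ll K := by
  unfold ll
  have : (1:ℝ) ≤ K := by exact_mod_cast hK
  have := log_nonneg this
  gcongr; linarith

theorem ll_le {K : ℕ} (hK : 1 ≤ K) : ll K ≤ 1 := by
  unfold ll
  have h : (1:ℝ) ≤ K := by exact_mod_cast hK
  rw [div_le_one (by linarith)]
  linarith [log_le_sub_one_of_pos (show (0:ℝ) < K by linarith)]

theorem U_est (α t D : ℝ) (hD : 0 ≤ D) : ∃ C : ℝ, 0 < C ∧ ∀ (K : ℕ) (μ : ℝ), 2 ≤ K → D ≤ K+1 → |μ - (2*K+1)^2| ≤ D → 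
    |UU α t μ K - vv (α^2/4) 0| ≤ C * ll K := by
  set β := α^2/4 with hβd
  have hβ : 0 ≤ β := by positivity
  set A := 4*α^2*(4+t^2) with hA
  set E := α^2*(16*(6+t^2)+18*D)*(1+exp β) with hE
  set c := 2*|α*t| + exp β with hc
  have hA0 : 0 ≤ A := by positivity
  have hE0 : 0 ≤ E := by positivity
  have hc0 : 0 < c := by positivity
  refine ⟨exp A * (c+E), by positivity, fun K μ hK hDK hμ => ?_⟩
  have hK' : (2:ℝ) ≤ K := by exact_mod_cast hK
  have hKp : (0:ℝ) < K := by linarith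
  have vb : ∀ j, |vv β j| ≤ 1 + exp β := by
    intro j
    obtain ⟨h1, h2⟩ := vv_bounds hβ j
    rw [abs_of_nonneg (by linarith)]
    refine h2.trans ?_
    have : exp β/((j:ℝ)+1) ≤ exp β := div_le_self (exp_pos _).le (by have : (0:ℝ) ≤ j := Nat.cast_nonneg j
                                                                     linarith)
    linarith
  have vb1 : ∀ j, |1 - vv β j| ≤ exp β/(j+1) := by
    intro j
    obtain ⟨h1, h2⟩ := vv_bounds hβ j
    rw [abs_sub_comm, abs_of_nonneg (by linarith)]; linarith
  have G := gron (fun k => UU α t μ k - vv β (K-k)) (fun k => eps α t μ k)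
    (fun k => (eps α t μ k - β/(((K:ℝ)-(k+1))*(K-k))) * vv β (K-k)) (c/K) ?_ ?_ (K-1) ?_
  · have G2 := G.2
    rw [show K - 1 + 1 = K by omega, Nat.sub_self] at G2
    refine G2.trans ?_
    have s1 : ∑ k ∈ Finset.range (K-1), |eps α t μ k| ≤ A := by
      have : ∀ k ∈ Finset.range (K-1), |eps α t μ k| ≤ A * (1/(((K:ℝ)-(k+1))*(K-k))) := by
        intro k hk
        rw [Finset.mem_range] at hk
        rw [mul_one_div]
        exact eps_bound hμ hDK (by omega)
      refine (Finset.sum_le_sum this).trans ?_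
      rw [← Finset.mul_sum]
      have h2 := tele K (K-1) (by omega)
      rw [Nat.cast_sub (by omega)] at h2
      simp at h2
      simp
      nlinarith
    have s2 : ∑ k ∈ Finset.range (K-1), |(eps α t μ k - β/(((K:ℝ)-(k+1))*(K-k))) * vv β (K-k)| ≤ E * ll K := by
      have : ∀ k ∈ Finset.range (K-1), |(eps α t μ k - β/(((K:ℝ)-(k+1))*(K-k))) * vv β (K-k)| ≤ (E/K) * (1/((K:ℝ)-k)) := by
        intro k hk
        rw [Finset.mem_range] at hk
        rw [abs_mul]
        have h1 := eps_diff (α := α) (t := t) hμ hDK (show k+1 < K by omega)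
        have h2 := vb (K-k)
        calc _ ≤ (α^2*(16*(6+t^2)+18*D)/(K*((K:ℝ)-k))) * (1 + exp β) := by
              gcongr
              exact (abs_nonneg _).trans h1
          _ = _ := by rw [hE]; field_simp
      refine (Finset.sum_le_sum this).trans ?_
      rw [← Finset.mul_sum]
      have h3 : ∑ k ∈ Finset.range (K-1), 1/((K:ℝ)-k) ≤ 1 + log K := by
        refine le_trans ?_ (harm K)
        apply Finset.sum_le_sum_of_subset_of_nonneg
        · intro x; simp; omega
        · intro x hx _
          have : (x:ℝ) < K := by exact_mod_cast Finset.mem_range.1 hx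
          have : 0 < (K:ℝ) - x := by linarith
          positivity
      calc _ ≤ (E/K) * (1+log K) := by gcongr
        _ = _ := by unfold ll; ring
    have hl := ll_ge (show 1 ≤ K by omega)
    calc _ ≤ exp A * (c * ll K + E * ll K) := by
          have : c/(K:ℝ) ≤ c * ll K := by rw [div_eq_mul_one_div]; gcongr
          have q0 : 0 ≤ c/(K:ℝ) := by positivity
          gcongr
      _ = _ := by ring
  · simp only [UU, Nat.sub_zero]
    refine (vb1 K).trans ?_
    have : exp β ≤ c := by rw [hc]; linarith [abs_nonneg (α*t)]
    gcongr; linarith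
  · simp only [UU]
    have d := DD_bound hμ hDK (show 0 < K by omega)
    simp at d
    have hd : (K:ℝ) ≤ |DD μ 0| := by
      rw [← abs_neg]; refine le_trans ?_ (le_abs_self _); nlinarith
    have h1 := vb1 (K-1)
    rw [Nat.cast_sub (by omega)] at h1
    simp only [Nat.cast_one, sub_add_cancel] at h1
    have h2 : |2*α*t/DD μ 0| ≤ 2*|α*t|/K := by
      rw [abs_div, show 2*α*t = 2*(α*t) by ring, abs_mul, abs_two]
      gcongr
    have : 1 - 2*α*t/DD μ 0 - vv β (K-1) = (1 - vv β (K-1)) - 2*α*t/DD μ 0 := by ring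
    rw [this]
    refine (abs_sub _ _).trans ?_
    rw [hc, add_div]; linarith
  · intro k hk
    simp only [UU]
    have hr := vv_rec hβ (K-(k+2))
    rw [show K-(k+2)+1 = K-(k+1) by omega, show K-(k+2)+2 = K-k by omega] at hr
    rw [Nat.cast_sub (by omega)] at hr
    push_cast at hr
    rw [show (K:ℝ)-(k+2)+1 = (K:ℝ)-(k+1) by ring, show (K:ℝ)-(k+2)+2 = (K:ℝ)-k by ring] at hr
    rw [hr]; ring

theorem fact_prod (K : ℕ) : ∏ k ∈ Finset.range K, (4*((K:ℝ)-k)*(K+1+k)) = 4^K * ((2*K).factorial : ℝ) := by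
  rw [Finset.prod_mul_distrib, Finset.prod_mul_distrib]
  have h1 : ∏ k ∈ Finset.range K, ((K:ℝ)-k) = (K.factorial : ℝ) := by
    rw [← Finset.prod_range_add_one_eq_factorial]
    push_cast
    rw [← Finset.prod_range_reflect]
    refine Finset.prod_congr rfl fun k hk => ?_
    have := Finset.mem_range.1 hk
    have : ((K - 1 - k : ℕ):ℝ) = (K:ℝ) - 1 - k := by
      rw [Nat.cast_sub (by omega), Nat.cast_sub (by omega)]; simp
    rw [this]; ring
  have h2 : ∏ k ∈ Finset.range K, ((K:ℝ)+1+k) = ((K+1).ascFactorial K : ℝ) := by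
    rw [Nat.ascFactorial_eq_prod_range]; push_cast; rfl
  rw [h1, h2, mul_assoc, ← Nat.cast_mul, Nat.factorial_mul_ascFactorial, Finset.prod_const, Finset.card_range, two_mul]

theorem Q_est (D : ℝ) (hD : 0 ≤ D) : ∃ C : ℝ, 0 < C ∧ ∀ (K : ℕ) (μ : ℝ), 1 ≤ K → |μ - (2*K+1)^2| ≤ D → 
    ∃ θ : ℝ, |θ| ≤ C * ll K ∧ ∏ i ∈ Finset.range K, DD μ i = (-1)^K * (4^K * ((2*K).factorial : ℝ)) * (1+θ) := by
  refine ⟨D * exp D + 1, by positivity, fun K μ hK hμ => ?_⟩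
  obtain ⟨ρ, hρ⟩ : ∃ ρ : ℝ, ρ = μ - (2*K+1)^2 := ⟨_, rfl⟩
  rw [← hρ] at hμ
  set x : ℕ → ℝ := fun k => ρ/(4*((K:ℝ)-k)*(K+1+k)) with hx
  have hKp : (0:ℝ) < K := by exact_mod_cast hK
  refine ⟨∏ k ∈ Finset.range K, (1 + x k) - 1, ?_, ?_⟩
  · have h1 := Finset.norm_prod_one_add_sub_one_le (Finset.range K) x
    simp only [Real.norm_eq_abs] at h1
    have s : ∑ k ∈ Finset.range K, |x k| ≤ D * ll K := by
      have : ∀ k ∈ Finset.range K, |x k| ≤ (D/K) * (1/((K:ℝ)-k)) := by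
        intro k hk
        have hk' : (k:ℝ) < K := by exact_mod_cast Finset.mem_range.1 hk
        have p : 0 < (K:ℝ)-k := by linarith
        have k0 : (0:ℝ) ≤ k := Nat.cast_nonneg k
        rw [hx]; simp only
        rw [abs_div, abs_of_pos (by positivity : 0 < 4*((K:ℝ)-k)*(K+1+k)), div_mul_div_comm, mul_one]
        have hd : (K:ℝ)*((K:ℝ)-k) ≤ 4*((K:ℝ)-k)*(K+1+k) := by nlinarith
        gcongr
      refine (Finset.sum_le_sum this).trans ?_
      rw [← Finset.mul_sum]
      calc _ ≤ (D/K) * (1+log K) := by gcongr; exact harm K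
        _ = _ := by unfold ll; ring
    refine h1.trans ?_
    have l1 := ll_le hK
    have l0 : 0 < ll K := lt_of_lt_of_le (by positivity) (ll_ge hK)
    have e1 : exp (∑ k ∈ Finset.range K, |x k|) ≤ exp (D * ll K) := exp_le_exp.2 s
    have e2 : exp (D * ll K) - 1 ≤ D * ll K * exp (D * ll K) := by
      have := add_one_le_exp (-(D * ll K))
      have h3 : exp (-(D * ll K)) * exp (D * ll K) = 1 := by rw [← exp_add]; simp
      nlinarith [exp_pos (D * ll K)]
    have e3 : exp (D * ll K) ≤ exp D := exp_le_exp.2 (by nlinarith)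
    have : D * ll K * exp (D * ll K) ≤ D * ll K * exp D := by gcongr
    nlinarith
  · rw [add_sub_cancel, ← fact_prod]
    have : (-1:ℝ)^K = ∏ k ∈ Finset.range K, (-1:ℝ) := by simp
    rw [this, ← Finset.prod_mul_distrib, ← Finset.prod_mul_distrib]
    refine Finset.prod_congr rfl fun k hk => ?_
    have hk' : (k:ℝ) < K := by exact_mod_cast Finset.mem_range.1 hk
    have p : (K:ℝ)-k ≠ 0 := by linarith
    have p2 : (K:ℝ)+1+k ≠ 0 := by positivity
    have : (4*((K:ℝ)-k)*(K+1+k)) * x k = ρ := by rw [hx]; field_simp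
    have h2 : -1 * (4*((K:ℝ)-k)*(K+1+k)) * (1 + x k) = -(4*((K:ℝ)-k)*(K+1+k)) - (4*((K:ℝ)-k)*(K+1+k)) * x k := by ring
    rw [h2, this, hρ]; unfold DD; ring

theorem ll_tendsto : Filter.Tendsto ll Filter.atTop (nhds 0) := by
  have h1 : Filter.Tendsto (fun x : ℝ => (1 + log x)/x) Filter.atTop (nhds 0) := by
    have a := Real.isLittleO_log_id_atTop.tendsto_div_nhds_zero
    have b := tendsto_inv_atTop_zero (𝕜 := ℝ)
    have := b.add a
    simp only [add_zero] at this
    refine this.congr fun x => ?_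
    simp only [id]; rw [add_div, one_div]
  exact h1.comp tendsto_natCast_atTop_atTop

theorem g0_asymp (α t D : ℝ) (hD : 0 ≤ D) : ∃ C : ℝ, 0 < C ∧ ∃ K1 : ℕ, ∀ K, K1 ≤ K → ∀ (μ : ℝ) (g : ℕ → ℝ),
    Coef α t K D μ g → ∃ θ : ℝ, |θ| ≤ C * ll K ∧ 
    g 0 * ((-1)^K * (4^K * ((2*K).factorial : ℝ))) = (∏ i ∈ Finset.range K, (2*α*(2*((i:ℝ)+1)+t))) * (1+θ) := by
  obtain ⟨C1, hC1, h1⟩ := U_est α t D hD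
  obtain ⟨C2, hC2, h2⟩ := Q_est D hD
  obtain ⟨B, hB, hb⟩ := ii_decay α
  set H := vv (α^2/4) 0 with hH
  have H1 : 1 ≤ H := (vv_bounds (by positivity) 0).1
  -- size conditions
  have hl : ∀ᶠ K : ℕ in Filter.atTop, (C1 + C2) * ll K < 1/2 := by
    have := ll_tendsto.const_mul (C1+C2)
    rw [mul_zero] at this
    exact this.eventually (gt_mem_nhds (by norm_num))
  obtain ⟨K0, hK0⟩ := Filter.eventually_atTop.1 hl
  obtain ⟨n1, hn1⟩ := exists_nat_ge D
  refine ⟨4*(D+B + C1 + (H+C1)*C2), by positivity, K0 + n1 + 2, fun K hK μ g hg => ?_⟩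
  have hs := hK0 K (by omega)
  have hDK : D ≤ K + 1 := by
    have : (n1:ℝ) ≤ K := by exact_mod_cast (by omega : n1 ≤ K)
    linarith
  have hK' : (2:ℝ) ≤ K := by exact_mod_cast (by omega : 2 ≤ K)
  have a1 := h1 K μ (by omega) hDK hg.mub
  obtain ⟨θ, hθ, hq⟩ := h2 K μ (by omega) hg.mub
  have l1 := ll_le (show 1 ≤ K by omega)
  have lg := ll_ge (show 1 ≤ K by omega)
  have l0 : 0 < ll K := lt_of_lt_of_le (by positivity) lg
  have gK : |g K - H| ≤ (D+B) * ll K := by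
    have d := hg.delta hD K
    have hp : pp α K K = H + ii α ((K:ℤ)+K+1) := by
      unfold pp; rw [sub_self, ii_zero_eq]
    rw [hp] at d
    have b := hb ((K:ℤ)+K+1)
    push_cast at b
    have b2 : B/(1+((K:ℝ)+K+1)^2) ≤ B/K := by gcongr; nlinarith
    have b3 : D/(2*(K:ℝ)+1) ≤ D/K := by gcongr; linarith
    have : g K - H = (g K - (H + ii α ((K:ℤ)+K+1))) + ii α ((K:ℤ)+K+1) := by ring
    rw [this]
    refine (abs_add_le _ _).trans ?_
    calc _ ≤ D/K + B/K := by linarith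
      _ = (D+B) * (1/K) := by ring
      _ ≤ _ := by gcongr
  have hne : ∀ k < K, DD μ k ≠ 0 := by
    intro k hk h0
    have := DD_bound hg.mub hDK hk
    have hk' : (k:ℝ) < K := by exact_mod_cast hk
    rw [h0] at this
    nlinarith
  have pid := (prod_id hg hne K).1 le_rfl
  rw [hq] at pid
  set U := UU α t μ K
  set P := ∏ i ∈ Finset.range K, (2*α*(2*((i:ℝ)+1)+t))
  set W := U * (1+θ) with hW
  have θs : |θ| < 1/2 := by nlinarith
  have Us : |U - H| < 1/2 := by nlinarith
  have Wp : 1/4 ≤ W := by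
    rw [abs_lt] at θs Us
    rw [hW]; nlinarith
  have WH : |W - H| ≤ (C1 + (H+C1)*C2) * ll K := by
    have : W - H = (U - H) + U*θ := by rw [hW]; ring
    rw [this]
    refine (abs_add_le _ _).trans ?_
    rw [abs_mul]
    have hU : |U| ≤ H + C1 := by
      have : |U| ≤ |U - H| + |H| := by simpa using abs_add_le (U-H) H
      rw [abs_of_pos (by linarith : 0 < H)] at this
      nlinarith
    calc _ ≤ C1 * ll K + (H+C1)*(C2 * ll K) := by gcongr
      _ = _ := by ring
  refine ⟨g K / W - 1, ?_, ?_⟩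
  · have : g K / W - 1 = (g K - W)/W := by field_simp
    rw [this, abs_div, abs_of_pos (by linarith : 0 < W), div_le_iff₀ (by linarith)]
    have h3 : |g K - W| ≤ (D+B + C1 + (H+C1)*C2) * ll K := by
      have := abs_sub_le (g K) H W
      rw [abs_sub_comm H W] at this
      nlinarith
    refine h3.trans ?_
    have p : 0 ≤ (D+B + C1 + (H+C1)*C2) * ll K := (abs_nonneg _).trans h3
    nlinarith
  · have Wn : W ≠ 0 := by linarith
    rw [add_sub_cancel]
    field_simp
    rw [hW]
    linear_combination -pid
end WH

namespace WH

theorem sin_prod (τ : ℝ) : ∃ C : ℝ, 0 < C ∧ ∃ K1 : ℕ, ∀ K, K1 ≤ K → 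
    |π * τ * ∏ i ∈ Finset.range K, (1 - τ^2/((i:ℝ)+1)^2) - sin (π*τ)| ≤ C/K * |sin (π*τ)| := by
  set s : ℕ → ℝ := fun K => π * τ * ∏ i ∈ Finset.range K, (1 - τ^2/((i:ℝ)+1)^2) with hs
  have lim : Filter.Tendsto s Filter.atTop (nhds (sin (π*τ))) := Real.tendsto_euler_sin_prod τ
  set A := τ^2 * exp (τ^2) with hA
  have hA0 : 0 ≤ A := by positivity
  have h1 : ∀ K : ℕ, 1 ≤ K → |s K - sin (π*τ)| ≤ A/K * |s K| := by
    intro K hK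
    have hK' : (1:ℝ) ≤ K := by exact_mod_cast hK
    have hKp : (0:ℝ) < K := by linarith
    have l2 : Filter.Tendsto (fun n => |s K - s (K+n)|) Filter.atTop (nhds |s K - sin (π*τ)|) := by
      have : Filter.Tendsto (fun n => s (K+n)) Filter.atTop (nhds (sin (π*τ))) := by
        have := (Filter.tendsto_add_atTop_iff_nat K).2 lim
        simpa only [add_comm] using this
      exact (tendsto_const_nhds.sub this).abs
    refine le_of_tendsto' l2 fun n => ?_
    have e : s (K+n) = s K * ∏ i ∈ Finset.range n, (1 + -(τ^2/(((K+i:ℕ):ℝ)+1)^2)) := by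
      rw [hs]; simp only
      rw [Finset.prod_range_add, mul_assoc (π*τ)]
      simp only [← sub_eq_add_neg]
    rw [e]
    set Q := ∏ i ∈ Finset.range n, (1 + -(τ^2/(((K+i:ℕ):ℝ)+1)^2))
    have hQ : |Q - 1| ≤ exp (∑ i ∈ Finset.range n, ‖-(τ^2/(((K+i:ℕ):ℝ)+1)^2)‖) - 1 :=
      Finset.norm_prod_one_add_sub_one_le (Finset.range n) (fun i : ℕ => -(τ^2/(((K+i:ℕ):ℝ)+1)^2))
    have sm : ∑ i ∈ Finset.range n, ‖-(τ^2/(((K+i:ℕ):ℝ)+1)^2)‖ ≤ τ^2 * (1/K - 1/(K+n)) := by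
      clear hQ l2 e
      clear Q
      induction n with
      | zero => simp
      | succ n ih =>
        rw [Finset.sum_range_succ]
        have : ‖-(τ^2/(((K+n:ℕ):ℝ)+1)^2)‖ ≤ τ^2 * (1/(K+n) - 1/(K+(n+1))) := by
          rw [norm_neg, Real.norm_of_nonneg (by positivity)]
          push_cast
          have : 1/((K:ℝ)+n) - 1/(K+(n+1)) = 1/((K+n)*(K+(n+1))) := by field_simp; ring
          rw [this, mul_one_div]
          have n0 : (0:ℝ) ≤ n := Nat.cast_nonneg n
          gcongr
          nlinarith
        have ih' := ih
        push_cast at this ih' ⊢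
        linarith
    have sm2 : ∑ i ∈ Finset.range n, ‖-(τ^2/(((K+i:ℕ):ℝ)+1)^2)‖ ≤ τ^2 / K := by
      refine sm.trans ?_
      have : 0 ≤ τ^2 * (1/((K:ℝ)+n)) := by positivity
      rw [mul_sub, mul_one_div (τ^2) (K:ℝ)]; linarith
    have ex : exp (τ^2/K) - 1 ≤ A/K := by
      have a1 := add_one_le_exp (-(τ^2/K))
      have a2 : exp (-(τ^2/K)) * exp (τ^2/K) = 1 := by rw [← exp_add]; simp
      have a3 : exp (τ^2/K) ≤ exp (τ^2) := exp_le_exp.2 (div_le_self (sq_nonneg τ) hK')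
      have a4 : τ^2/K * exp (τ^2/K) ≤ τ^2/K * exp (τ^2) := by gcongr
      have : A/K = τ^2/K * exp (τ^2) := by rw [hA]; ring
      rw [this]
      nlinarith [exp_pos (τ^2/K)]
    have hQ2 : |Q - 1| ≤ A/K := by
      refine hQ.trans (le_trans ?_ ex)
      have := exp_le_exp.2 sm2
      linarith
    have : s K - s K * Q = -(s K * (Q-1)) := by ring
    rw [this, abs_neg, abs_mul, mul_comm]
    gcongr
  obtain ⟨n1, hn1⟩ := exists_nat_ge (2*A)
  refine ⟨2*A+1, by positivity, n1+1, fun K hK => ?_⟩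
  have h2 := h1 K (by omega)
  have hKn : (n1:ℝ) ≤ K := by exact_mod_cast (by omega : n1 ≤ K)
  have hKp : (0:ℝ) < K := by exact_mod_cast (by omega : 0 < K)
  have hAK : A/K ≤ 1/2 := by rw [div_le_iff₀ hKp]; linarith
  have h3 : |s K| ≤ 2 * |sin (π*τ)| := by
    have : |s K| ≤ |s K - sin (π*τ)| + |sin (π*τ)| := by simpa using abs_add_le (s K - sin (π*τ)) (sin (π*τ))
    nlinarith [abs_nonneg (s K)]
  refine h2.trans ?_
  calc A/K * |s K| ≤ A/K * (2 * |sin (π*τ)|) := by gcongr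
    _ = 2*A/K * |sin (π*τ)| := by ring
    _ ≤ _ := by gcongr; linarith

theorem chain {x y z a b : ℝ} (hy : 0 ≤ y) (ha : 0 ≤ a) (h1 : |x - y| ≤ a*y) (h2 : |y - z| ≤ b*z) :
    |x - z| ≤ (a*(1+b)+b)*z := by
  have h3 : y ≤ (1+b)*z := by
    have := (abs_le.1 h2).2; linarith
  have := abs_sub_le x y z
  have : a*y ≤ a*((1+b)*z) := by gcongr
  linarith

/-- leading term -/
def cc (α : ℝ) (K : ℕ) : ℝ := 8*α^(2*K+1)*(K.factorial:ℝ)^2/((2*K).factorial:ℝ)^2/π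

theorem prodP (α t : ℝ) (K : ℕ) : (∏ i ∈ Finset.range K, (2*α*(2*((i:ℝ)+1)+t))) * (∏ i ∈ Finset.range K, (2*α*(2*((i:ℝ)+1)+(-t)))) =
    16^K * α^(2*K) * (K.factorial:ℝ)^2 * ∏ i ∈ Finset.range K, (1 - (t/2)^2/((i:ℝ)+1)^2) := by
  rw [← Finset.prod_range_add_one_eq_factorial]
  push_cast
  rw [← Finset.prod_pow, pow_mul, ← mul_pow, ← Finset.prod_mul_distrib]
  rw [show (16*α^2)^K = ∏ i ∈ Finset.range K, (16*α^2) by simp, ← Finset.prod_mul_distrib, ← Finset.prod_mul_distrib]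
  refine Finset.prod_congr rfl fun i _ => ?_
  have : (i:ℝ)+1 ≠ 0 := by positivity
  field_simp
  ring

set_option maxHeartbeats 1000000 in
theorem core (α t : ℝ) (hα : 0 < α) (lamM : ℕ → ℝ) (hM : EnumSemi (pot α t) lamM) :
    ∃ C : ℝ, 0 < C ∧ ∃ M : ℕ, ∀ K, M ≤ K → 
    abs ((lamM (2*K+2) - lamM (2*K+1)) - cc α K * |sin (π*(t/2))|) ≤ C * ll K * (cc α K * |sin (π*(t/2))|) := by
  obtain ⟨e, y, y1, C1, hE⟩ := specData_exists (pot α t) (pot_cont α t) _ (pot_bd α t)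
  obtain ⟨o, z, z1, C2, hO⟩ := specData_exists (pot α (-t)) (pot_cont α (-t)) _ (pot_bd α (-t))
  obtain ⟨Kg, hg⟩ := gap_eq α t lamM hM e o y y1 z z1 C1 C2 hE hO
  obtain ⟨D1, hD1, hc1⟩ := coef_exists α t hE
  obtain ⟨D2, hD2, hc2⟩ := coef_exists α (-t) hO
  set D := max D1 D2
  have hD : 0 < D := lt_of_lt_of_le hD1 (le_max_left _ _)
  obtain ⟨Cs, hCs, hsplit⟩ := split α t D hD.le
  obtain ⟨Ca, hCa, Ka, ha⟩ := g0_asymp α t D hD.le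
  obtain ⟨Cb, hCb, Kb, hb⟩ := g0_asymp α (-t) D hD.le
  obtain ⟨Cq, hCq, Kq, hq⟩ := sin_prod (t/2)
  obtain ⟨n1, hn1⟩ := exists_nat_ge Cs
  set E1 := Ca + Cb + Ca*Cb with hE1
  set E2 := E1*(1+Cq) + Cq with hE2
  have hE1p : 0 < E1 := by positivity
  have hE2p : 0 < E2 := by positivity
  refine ⟨2*Cs*(1+E2)+E2, by positivity, Kg + Ka + Kb + Kq + n1 + 1, fun K hK => ?_⟩
  have l1 := ll_le (show 1 ≤ K by omega)
  have lg := ll_ge (show 1 ≤ K by omega)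
  have hKp : (0:ℝ) < K := by exact_mod_cast (by omega : 0 < K)
  have l0 : 0 < ll K := lt_of_lt_of_le (by positivity) lg
  rw [hg K (by omega)]
  obtain ⟨g, hgc⟩ := hc1 K
  obtain ⟨g', hgc'⟩ := hc2 K
  have hgc := hgc.mono hD1.le (le_max_left D1 D2)
  have hgc' := hgc'.mono hD2.le (le_max_right D1 D2)
  have hsp := hsplit K _ _ g g' hgc hgc'
  obtain ⟨θ, hθ, hθe⟩ := ha K (by omega) _ g hgc
  obtain ⟨θ', hθ', hθe'⟩ := hb K (by omega) _ g' hgc'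
  have hsin := hq K (by omega)
  rw [show e K + 2*α^2 - (o K + 2*α^2) = e K - o K by ring] at hsp
  set G := |e K - o K| with hG
  set T := |4*α*t*(g 0 * g' 0)| with hT
  set Pr := ∏ i ∈ Finset.range K, (1 - (t/2)^2/((i:ℝ)+1)^2) with hPr
  set F : ℝ := ((2*K).factorial:ℝ) with hF
  have hFp : 0 < F := by rw [hF]; exact_mod_cast Nat.factorial_pos _
  have hcp : 0 < cc α K := by
    unfold cc
    have : (0:ℝ) < (K.factorial:ℝ) := by exact_mod_cast Nat.factorial_pos _
    have := pi_pos
    positivity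
  set T0 := cc α K * |π*(t/2)*Pr| with hT0
  have hT0p : 0 ≤ T0 := by positivity
  have hTT : T = T0 * |(1+θ)*(1+θ')| := by
    have hm : (g 0 * ((-1)^K * (4^K * F))) * (g' 0 * ((-1)^K * (4^K * F))) = g 0 * g' 0 * (16^K * F^2) := by
      have : ((-1:ℝ)^K)*((-1)^K) = 1 := by rw [← mul_pow]; simp
      have h16 : (16:ℝ)^K = 4^K * 4^K := by rw [← mul_pow]; norm_num
      rw [h16]
      linear_combination (g 0 * g' 0 * (4^K*4^K*F^2)) * this
    rw [hθe, hθe', mul_mul_mul_comm, prodP] at hm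
    have hgg : 4*α*t*(g 0 * g' 0) = cc α K * (π*(t/2)*Pr) * ((1+θ)*(1+θ')) := by
      have hne : (16:ℝ)^K * F^2 ≠ 0 := by positivity
      apply mul_right_cancel₀ hne
      unfold cc
      rw [← hF, mul_assoc (4*α*t), ← hm, ← hPr]
      have := pi_pos.ne'
      field_simp
      ring
    rw [hT, hgg, abs_mul, abs_mul (cc α K), abs_of_pos hcp]
  have c1 : |T - T0| ≤ (E1 * ll K) * T0 := by
    have : T - T0 = (|(1+θ)*(1+θ')| - 1) * T0 := by rw [hTT]; ring
    rw [this, abs_mul, abs_of_nonneg hT0p]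
    gcongr
    have := abs_abs_sub_abs_le ((1+θ)*(1+θ')) 1
    rw [abs_one] at this
    refine this.trans ?_
    rw [show (1+θ)*(1+θ')-1 = θ + θ' + θ*θ' by ring]
    refine (abs_add_le _ _).trans ?_
    have b1 := abs_add_le θ θ'
    have b2 : |θ*θ'| ≤ (Ca * ll K) * (Cb * 1) := by
      rw [abs_mul]; gcongr
      exact hθ'.trans (by gcongr)
    rw [hE1]; nlinarith
  have c2 : abs (T0 - cc α K * |sin (π*(t/2))|) ≤ (Cq * ll K) * (cc α K * |sin (π*(t/2))|) := by
    rw [hT0, ← mul_sub, abs_mul, abs_of_pos hcp]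
    have h1 := (abs_abs_sub_abs_le (π*(t/2)*Pr) (sin (π*(t/2)))).trans hsin
    have h2 : Cq/K * |sin (π*(t/2))| ≤ (Cq * ll K) * |sin (π*(t/2))| := by
      rw [div_eq_mul_one_div]; gcongr
    calc _ ≤ cc α K * ((Cq * ll K) * |sin (π*(t/2))|) := by gcongr; exact h1.trans h2
      _ = _ := by ring
  set BB := cc α K * |sin (π*(t/2))| with hBB
  have hBBp : 0 ≤ BB := by positivity
  have c3 : |T - BB| ≤ (E2 * ll K) * BB := by
    refine (chain hT0p (by positivity) c1 c2).trans ?_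
    gcongr
    rw [hE2]
    have : E1 * ll K * (1 + Cq * ll K) ≤ E1 * ll K * (1 + Cq * 1) := by gcongr
    linarith
  have hG0 : 0 ≤ G := abs_nonneg _
  have hTn : 0 ≤ T := abs_nonneg _
  have hCN : Cs/(2*K+1) ≤ 1/2 := by
    have : (n1:ℝ) ≤ K := by exact_mod_cast (by omega : n1 ≤ K)
    rw [div_le_iff₀ (by positivity)]; linarith
  have hGT : G ≤ 2*T := by
    have h1 := (abs_le.1 hsp).2
    have h2 : Cs/(2*K+1) * G ≤ 1/2 * G := mul_le_mul_of_nonneg_right hCN hG0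
    linarith
  have c0 : |G - T| ≤ (2*Cs * ll K) * T := by
    refine hsp.trans ?_
    have : Cs/(2*(K:ℝ)+1) ≤ Cs * ll K := by
      calc _ ≤ Cs/(K:ℝ) := by gcongr; linarith
        _ = Cs * (1/K) := by ring
        _ ≤ _ := by gcongr
    calc _ ≤ (Cs * ll K) * (2*T) := by gcongr
      _ = _ := by ring
  refine (chain hTn (by positivity) c0 c3).trans ?_
  gcongr
  have : 2*Cs * ll K * (1 + E2 * ll K) ≤ 2*Cs * ll K * (1 + E2 * 1) := by gcongr
  linarith
end WH

namespace WH
theorem cc_eq (c x Q : ℝ) (hc : c < 0) (K : ℕ) (hK : 1 ≤ K) (hQ : Q = x^(2*K+1)) :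
    cc (x * (Real.sqrt (-2*c)/2)) K = Q * |c|^K * Real.sqrt (-2*c) /
      (2^(3*(K+1)-5) * ((2*(K+1)-3).doubleFactorial : ℝ)^2 * π) := by
  set s := Real.sqrt (-2*c) with hs
  have hs2 : s^2 = -2*c := Real.sq_sqrt (by linarith)
  have hac : |c| = s^2/2 := by rw [abs_of_neg hc, hs2]; ring
  obtain ⟨L, rfl⟩ : ∃ L, K = L+1 := ⟨K-1, by omega⟩
  have f1 : ((2*(L+1)).factorial : ℝ) = 2^(L+1) * ((L+1).factorial:ℝ) * ((2*L+1).doubleFactorial : ℝ) := by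
    have h1 := Nat.factorial_eq_mul_doubleFactorial (2*L+1)
    rw [show 2*L+1+1 = 2*(L+1) by ring, Nat.doubleFactorial_two_mul] at h1
    rw [h1]; push_cast; ring
  unfold cc
  rw [f1, hQ, hac, show 2*(L+1+1)-3 = 2*L+1 by omega, show 3*(L+1+1)-5 = 3*L+1 by omega]
  have a1 : ((L+1).factorial:ℝ) ≠ 0 := by positivity
  have a2 : ((2*L+1).doubleFactorial:ℝ) ≠ 0 := by
    have := Nat.doubleFactorial_pos (2*L+1)
    positivity
  have := Real.pi_pos.ne'
  have e8 : (2:ℝ)^(3*L+1) = 8^L*2 := by rw [pow_succ, pow_mul]; norm_num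
  have e4 : ((2:ℝ)^(L+1))^2 = 4^L*4 := by rw [← pow_mul, mul_comm, pow_mul, pow_succ]; norm_num
  have ex : (x*(s/2))^(2*(L+1)+1) = x^(2*(L+1)+1) * (s^2)^(L+1)*s/(4^L*8) := by
    rw [mul_pow, div_pow, show (2:ℝ)^(2*(L+1)+1) = 4^L*8 by
      rw [show 2*(L+1)+1 = 2*L+3 by ring, pow_add, pow_mul]; norm_num]
    ring
  have e2 : (s^2/2)^(L+1) = (s^2)^(L+1)/(2^L*2) := by rw [div_pow, pow_succ 2 L]
  have e88 : (8:ℝ)^L = 4^L*2^L := by rw [← mul_pow]; norm_num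
  rw [ex, e2, e8, mul_pow, mul_pow, e4, e88]
  have e44 : (4:ℝ)^L = 2^L*2^L := by rw [← mul_pow]; norm_num
  rw [e44]
  field_simp
  ring
end WH

theorem stmt9 (b c m1 q : ℝ) (hc : c < 0) (hm1 : 0 < m1) (hq : 0 < q)
    (lamP lamM : ℕ → ℝ)
    (hP : EnumPer (fun x => b * q ^ m1 * Real.cos (2 * x) + c * q ^ (2 * m1) * Real.cos (4 * x))
      lamP)
    (hM : EnumSemi (fun x => b * q ^ m1 * Real.cos (2 * x) + c * q ^ (2 * m1) * Real.cos (4 * x))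
      lamM)
    (B : ℕ → ℝ)
    (hB : ∀ m : ℕ, 2 ≤ m →
      B m = q ^ (m1 * (2 * (m : ℝ) - 1)) * |c| ^ (m - 1) * Real.sqrt (-2 * c) /
          (2 ^ (3 * m - 5) * ((2 * m - 3).doubleFactorial : ℝ) ^ 2 * Real.pi) *
        |Real.sin (b * Real.pi / (4 * Real.sqrt (-2 * c)))|) :
    ∃ C > 0, ∃ M : ℕ, 0 < M ∧ ∀ m : ℕ, M ≤ m →
      |gapLen lamP lamM (2 * m - 1) - B m| ≤ C * B m * Real.log m / m := by
  have hs0 : 0 < Real.sqrt (-2*c) := Real.sqrt_pos.2 (by linarith)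
  have hs2 : Real.sqrt (-2*c)^2 = -2*c := Real.sq_sqrt (by linarith)
  have hx0 : 0 < q^m1 := Real.rpow_pos_of_pos hq m1
  have hx2 : q^(2*m1) = (q^m1)^2 := by
    rw [mul_comm, Real.rpow_mul hq.le]; norm_cast
  set s := Real.sqrt (-2*c) with hs
  have hpot : (fun x => b * q ^ m1 * Real.cos (2 * x) + c * q ^ (2 * m1) * Real.cos (4 * x)) =
      WH.pot (q^m1 * (s/2)) (-b/(2*s)) := by
    funext x
    unfold WH.pot
    have e1 : -(4*(q^m1 * (s/2))*(-b/(2*s))) = b * q^m1 := by field_simp; ring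
    have e2 : 2*(q^m1 * (s/2))^2 = -(c * (q^m1)^2) := by
      rw [mul_pow, div_pow, hs2]; ring
    rw [e1, e2, hx2]; ring
  rw [hpot] at hM
  obtain ⟨C, hC, M, h⟩ := WH.core _ _ (by positivity) lamM hM
  refine ⟨4*C, by positivity, M+3, by omega, fun m hm => ?_⟩
  obtain ⟨K, rfl⟩ : ∃ K, m = K+1 := ⟨m-1, by omega⟩
  have hK := h K (by omega)
  have hBm : B (K+1) = WH.cc (q^m1 * (s/2)) K * |Real.sin (π*(-b/(2*s)/2))| := by
    rw [hB (K+1) (by omega)]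
    rw [hs, WH.cc_eq c (q^m1) (q ^ (m1 * (2 * ((K+1:ℕ) : ℝ) - 1))) hc K (by omega)]
    · congr 1
      rw [← hs, show π*(-b/(2*s)/2) = -(b * Real.pi / (4*s)) by field_simp; ring, Real.sin_neg, abs_neg]
    · rw [Real.rpow_mul hq.le, ← Real.rpow_natCast]
      congr 1
      push_cast; ring
  have hgap : gapLen lamP lamM (2*(K+1)-1) = lamM (2*K+2) - lamM (2*K+1) := by
    unfold gapLen
    rw [show 2*(K+1)-1 = 2*K+1 by omega, if_pos (by exact ⟨K, rfl⟩)]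
  rw [hgap]
  rw [← hBm] at hK
  refine hK.trans ?_
  have hB0 : 0 ≤ B (K+1) := by
    rw [hBm]
    unfold WH.cc
    have := Real.pi_pos
    positivity
  have hK2 : (2:ℝ) ≤ K := by exact_mod_cast (by omega : 2 ≤ K)
  have hll : WH.ll K ≤ 4 * (Real.log ((K+1:ℕ):ℝ) / ((K+1:ℕ):ℝ)) := by
    unfold WH.ll
    push_cast
    have g1 : Real.log K ≤ Real.log ((K:ℝ)+1) := Real.log_le_log (by linarith) (by linarith)
    have g2 : 1 ≤ Real.log ((K:ℝ)+1) := by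
      rw [Real.le_log_iff_exp_le (by linarith)]
      linarith [Real.exp_one_lt_d9]
    rw [← mul_div_assoc, div_le_div_iff₀ (by linarith) (by linarith)]
    have : 1 + Real.log K ≤ 2 * Real.log ((K:ℝ)+1) := by linarith
    calc _ ≤ 2 * Real.log ((K:ℝ)+1) * ((K:ℝ)+1) := by gcongr
      _ ≤ 2 * Real.log ((K:ℝ)+1) * (2*K) := by
        have : (K:ℝ)+1 ≤ 2*K := by linarith
        gcongr
      _ = _ := by ring
  calc C * WH.ll K * B (K+1) ≤ C * (4 * (Real.log ((K+1:ℕ):ℝ) / ((K+1:ℕ):ℝ))) * B (K+1) := by gcongr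
    _ = _ := by ring
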